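/- arXiv:0711.3258 — 2 statements merged into one kernel-verified Lean document; each statement's English description precedes it below -/
import Mathlib

section
/- (Lemma 2.1, local uniformity.) Let K ⊆ U be compact, T₀ ∈ ℝ, and suppose z₀ ∈ (1,∞)×K×ℝ×ℝ^{n-1} is an initial condition (at time T₀) whose backward solution of the Hamiltonian system stays in (1,∞)×K×ℝ×ℝ^{n-1} for all t ≤ T₀, has energy p₀ > 0, and satisfies r(t) → ∞ as t → −∞. Then there exist a neighborhood V of z₀ and a constant C > 0 such that for every initial condition z ∈ V, the backward solution with z(T₀) = z exists for all t ≤ T₀ and satisfies r(t;z) > C^{-1}|t| − C for all t < −C; in particular r(t;z) → ∞ as t → −∞ for all z ∈ V. -/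
open Real Set Filter Topology

namespace Scattering

/-- The Euclidean norm of a vector in `Fin m → ℝ`. -/
noncomputable def eNorm {m : ℕ} (v : Fin m → ℝ) : ℝ := Real.sqrt (∑ j, v j ^ 2)

/-- Partial derivative in the radial variable of a function of `(r, θ)`. -/
noncomputable def pderivR {m : ℕ} (f : ℝ → (Fin m → ℝ) → ℝ) : ℝ → (Fin m → ℝ) → ℝ :=
  fun r θ => deriv (fun s => f s θ) r

/-- Partial derivative in the `j`-th angular variable of a function of `(r, θ)`. -/
noncomputable def pderivTheta {m : ℕ} (j : Fin m) (f : ℝ → (Fin m → ℝ) → ℝ) :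
    ℝ → (Fin m → ℝ) → ℝ :=
  fun r θ => fderiv ℝ (f r) θ (Pi.single j 1)

/-- Iterated angular derivatives `∂_θ^α` for a multi-index `α` (a list of directions). -/
noncomputable def thetaDerivs {m : ℕ} (α : List (Fin m)) (f : ℝ → (Fin m → ℝ) → ℝ) :
    ℝ → (Fin m → ℝ) → ℝ :=
  α.foldr pderivTheta f

/-- `DecayOn f ν S K` : for all `k, α` there is `C > 0` with
`|∂_r^k ∂_θ^α f(r,θ)| ≤ C r^{-ν-k}` for `r ∈ (S,∞)`, `θ ∈ K`. -/
def DecayOn {m : ℕ} (f : ℝ → (Fin m → ℝ) → ℝ) (ν S : ℝ) (K : Set (Fin m → ℝ)) : Prop :=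
  ∀ (k : ℕ) (α : List (Fin m)), ∃ C > 0, ∀ r ∈ Ioi S, ∀ θ ∈ K,
    |(pderivR (m := m))^[k] (thetaDerivs α f) r θ| ≤ C * r ^ (-ν - (k : ℝ))

/-- The classical kinetic energy function
`p(r,θ,ρ,ω) = ρ² + r⁻²Σ h^{jk} ω_j ω_k + a₀ ρ² + r⁻¹ Σ a₁^j ρ ω_j + r⁻² Σ a₂^{jk} ω_j ω_k`. -/
noncomputable def energy {m : ℕ} (hM : (Fin m → ℝ) → Matrix (Fin m) (Fin m) ℝ)
    (a0 : ℝ → (Fin m → ℝ) → ℝ) (a1 : ℝ → (Fin m → ℝ) → Fin m → ℝ)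
    (a2 : ℝ → (Fin m → ℝ) → Matrix (Fin m) (Fin m) ℝ) :
    ℝ → (Fin m → ℝ) → ℝ → (Fin m → ℝ) → ℝ :=
  fun r θ ρ ω =>
    ρ ^ 2 + (∑ j, ∑ k, hM θ j k * ω j * ω k) / r ^ 2 + a0 r θ * ρ ^ 2
      + (∑ j, a1 r θ j * ρ * ω j) / r + (∑ j, ∑ k, a2 r θ j k * ω j * ω k) / r ^ 2

section PhaseDerivs

variable {m : ℕ} (p : ℝ → (Fin m → ℝ) → ℝ → (Fin m → ℝ) → ℝ)

/-- `∂p/∂r`. -/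
noncomputable def pdR (r : ℝ) (θ : Fin m → ℝ) (ρ : ℝ) (ω : Fin m → ℝ) : ℝ :=
  deriv (fun s => p s θ ρ ω) r

/-- `∂p/∂θ_j`. -/
noncomputable def pdTheta (j : Fin m) (r : ℝ) (θ : Fin m → ℝ) (ρ : ℝ) (ω : Fin m → ℝ) : ℝ :=
  fderiv ℝ (fun θ' => p r θ' ρ ω) θ (Pi.single j 1)

/-- `∂p/∂ρ`. -/
noncomputable def pdRho (r : ℝ) (θ : Fin m → ℝ) (ρ : ℝ) (ω : Fin m → ℝ) : ℝ :=
  deriv (fun s => p r θ s ω) ρ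

/-- `∂p/∂ω_j`. -/
noncomputable def pdOmega (j : Fin m) (r : ℝ) (θ : Fin m → ℝ) (ρ : ℝ) (ω : Fin m → ℝ) : ℝ :=
  fderiv ℝ (fun ω' => p r θ ρ ω') ω (Pi.single j 1)

/-- `(r,θ,ρ,ω)` solves the Hamiltonian system
`ṙ = ∂p/∂ρ, θ̇ = ∂p/∂ω, ρ̇ = -∂p/∂r, ω̇ = -∂p/∂θ` on the set `I` of times. -/
def IsHamSolOn (r : ℝ → ℝ) (θ : ℝ → Fin m → ℝ) (ρ : ℝ → ℝ) (ω : ℝ → Fin m → ℝ)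
    (I : Set ℝ) : Prop :=
  ∀ t ∈ I,
    HasDerivAt r (pdRho p (r t) (θ t) (ρ t) (ω t)) t ∧
    (∀ j, HasDerivAt (fun s => θ s j) (pdOmega p j (r t) (θ t) (ρ t) (ω t)) t) ∧
    HasDerivAt ρ (-pdR p (r t) (θ t) (ρ t) (ω t)) t ∧
    (∀ j, HasDerivAt (fun s => ω s j) (-pdTheta p j (r t) (θ t) (ρ t) (ω t)) t)

/-- The interaction-picture (time-dependent) Hamiltonian `K(t,R,θ,ρ,ω) = ρ² - p(R+2tρ,θ,ρ,ω)`. -/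
noncomputable def Kint (t R : ℝ) (θ : Fin m → ℝ) (ρ : ℝ) (ω : Fin m → ℝ) : ℝ :=
  ρ ^ 2 - p (R + 2 * t * ρ) θ ρ ω

/-- `∂K/∂R`. -/
noncomputable def KdR (t R : ℝ) (θ : Fin m → ℝ) (ρ : ℝ) (ω : Fin m → ℝ) : ℝ :=
  deriv (fun x => Kint p t x θ ρ ω) R

/-- `∂K/∂θ_j`. -/
noncomputable def KdTheta (j : Fin m) (t R : ℝ) (θ : Fin m → ℝ) (ρ : ℝ) (ω : Fin m → ℝ) : ℝ :=
  fderiv ℝ (fun θ' => Kint p t R θ' ρ ω) θ (Pi.single j 1)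

/-- `∂K/∂ρ`. -/
noncomputable def KdRho (t R : ℝ) (θ : Fin m → ℝ) (ρ : ℝ) (ω : Fin m → ℝ) : ℝ :=
  deriv (fun x => Kint p t R θ x ω) ρ

/-- `∂K/∂ω_j`. -/
noncomputable def KdOmega (j : Fin m) (t R : ℝ) (θ : Fin m → ℝ) (ρ : ℝ) (ω : Fin m → ℝ) : ℝ :=
  fderiv ℝ (fun ω' => Kint p t R θ ρ ω') ω (Pi.single j 1)

end PhaseDerivs

/-- The phase space `ℝ × ℝ^m × ℝ × ℝ^m` with coordinates `(R, θ, ρ, ω)`. -/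
abbrev Phase (m : ℕ) : Type := ℝ × (Fin m → ℝ) × ℝ × (Fin m → ℝ)

/-- A curve `f = (R,θ,ρ,ω)` solves the interaction-picture Hamiltonian system
`Ṙ = ∂K/∂ρ, θ̇ = ∂K/∂ω, ρ̇ = -∂K/∂R, ω̇ = -∂K/∂θ` on the set `I` of times. -/
def IsIntSolOn {m : ℕ} (p : ℝ → (Fin m → ℝ) → ℝ → (Fin m → ℝ) → ℝ)
    (f : ℝ → Phase m) (I : Set ℝ) : Prop :=
  ∀ t ∈ I,
    HasDerivAt (fun s => (f s).1) (KdRho p t (f t).1 (f t).2.1 (f t).2.2.1 (f t).2.2.2) t ∧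
    (∀ j, HasDerivAt (fun s => (f s).2.1 j)
      (KdOmega p j t (f t).1 (f t).2.1 (f t).2.2.1 (f t).2.2.2) t) ∧
    HasDerivAt (fun s => (f s).2.2.1)
      (-(KdR p t (f t).1 (f t).2.1 (f t).2.2.1 (f t).2.2.2)) t ∧
    (∀ j, HasDerivAt (fun s => (f s).2.2.2 j)
      (-(KdTheta p j t (f t).1 (f t).2.1 (f t).2.2.1 (f t).2.2.2)) t)

/-- The data of a scattering metric of short-range type on the end `(1,∞) × U`:
the boundary metric `h` (smooth, symmetric, positive definite) and the coefficients
`a₀, a₁, a₂` of the kinetic energy, smooth on `(1,∞) × U` with the short-range decay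
`|∂_r^k ∂_θ^α a₀| ≤ C r^{-1-μ-k}`, `|∂_r^k ∂_θ^α a₁| ≤ C r^{-μ-k}`,
`|∂_r^k ∂_θ^α a₂| ≤ C r^{-μ-k}` on `(1,∞) × K` for every compact `K ⊆ U`. -/
structure Coeffs (m : ℕ) (μ : ℝ) (U : Set (Fin m → ℝ)) where
  hM : (Fin m → ℝ) → Matrix (Fin m) (Fin m) ℝ
  a0 : ℝ → (Fin m → ℝ) → ℝ
  a1 : ℝ → (Fin m → ℝ) → Fin m → ℝ
  a2 : ℝ → (Fin m → ℝ) → Matrix (Fin m) (Fin m) ℝ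
  hM_smooth : ∀ j k, ContDiffOn ℝ (⊤ : ℕ∞) (fun θ => hM θ j k) U
  hM_symm : ∀ θ ∈ U, (hM θ).IsSymm
  hM_posdef : ∀ θ ∈ U, (hM θ).PosDef
  a0_smooth : ContDiffOn ℝ (⊤ : ℕ∞) (fun z : ℝ × (Fin m → ℝ) => a0 z.1 z.2) (Ioi (1:ℝ) ×ˢ U)
  a1_smooth : ∀ j, ContDiffOn ℝ (⊤ : ℕ∞) (fun z : ℝ × (Fin m → ℝ) => a1 z.1 z.2 j) (Ioi (1:ℝ) ×ˢ U)
  a2_smooth : ∀ j k, ContDiffOn ℝ (⊤ : ℕ∞) (fun z : ℝ × (Fin m → ℝ) => a2 z.1 z.2 j k) (Ioi (1:ℝ) ×ˢ U)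
  a2_symm : ∀ r θ j k, a2 r θ j k = a2 r θ k j
  a0_decay : ∀ K : Set (Fin m → ℝ), IsCompact K → K ⊆ U → DecayOn a0 (1 + μ) 1 K
  a1_decay : ∀ K : Set (Fin m → ℝ), IsCompact K → K ⊆ U →
    ∀ j, DecayOn (fun r θ => a1 r θ j) μ 1 K
  a2_decay : ∀ K : Set (Fin m → ℝ), IsCompact K → K ⊆ U →
    ∀ j k, DecayOn (fun r θ => a2 r θ j k) μ 1 K

/-- The kinetic energy function associated to the data `c`. -/
noncomputable def Coeffs.p {m : ℕ} {μ : ℝ} {U : Set (Fin m → ℝ)} (c : Coeffs m μ U) :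
    ℝ → (Fin m → ℝ) → ℝ → (Fin m → ℝ) → ℝ :=
  energy c.hM c.a0 c.a1 c.a2

/-!
In reversed time `s = T₀ - t`, the derivative of `-r ρ` along the flow is `2 p + o(1)`, so along the
reference trajectory `-r ρ` grows linearly. As the energy bounds `(ρ, ω / r)`, the speed `ṙ` is
bounded, so that `r` grows at most linearly and `-ρ` is eventually bounded below by a positive
constant. Then `r` grows linearly, and since `h(ω, ω)` is conserved by the free motion and changes
at a rate `O(r ^ (-1 - μ) (1 + h(ω, ω)))` under the perturbation, `ω` stays bounded.

On bounded momenta the reversed field is `(-2 ρ, 0) + (O(r ^ (-μ)), O(r ^ (-1 - μ)))` in the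
splitting into `r` and `y = (θ, ρ, ω)`. Starting far out near a point where `-ρ` is bounded below,
`r` grows linearly, so that the total variation of `y` is `O(r ^ (-μ))` and, by a bootstrap
argument, `y` never leaves the region where this holds. Continuous dependence on the initial
condition carries a neighborhood of `z₀` into that trapping region.
-/

section IntegralCurves

variable {E : Type*} [NormedAddCommGroup E] [NormedSpace ℝ E] [FiniteDimensional ℝ E]

lemma exists_lipschitzOnWith_closedBall_of_contDiff {G : E → E} (hG : ContDiff ℝ 1 G)
    (x : E) (a : ℝ) : ∃ k, LipschitzOnWith k G (Metric.closedBall x a) := by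
  have : ProperSpace E := FiniteDimensional.proper ℝ E
  obtain ⟨k, hk⟩ := (isCompact_closedBall x a).bddAbove_image
    (hG.continuous_fderiv one_ne_zero).nnnorm.continuousOn
  exact ⟨k, (convex_closedBall x a).lipschitzOnWith_of_nnnorm_fderiv_le
    (fun y _ ↦ hG.differentiable one_ne_zero y) (fun y hy ↦ hk (mem_image_of_mem _ hy))⟩

lemma exists_hasDerivAt_of_contDiff_of_bounded {G : E → E} (hG : ContDiff ℝ 1 G) {B : ℝ}
    (hB : ∀ x, ‖G x‖ ≤ B) (x : E) : ∃ Z : ℝ → E, Z 0 = x ∧ ∀ s, HasDerivAt Z (G (Z s)) s := by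
  have : CompleteSpace E := FiniteDimensional.complete ℝ E
  lift B to NNReal using (norm_nonneg _).trans (hB 0)
  suffices h : ∃ Z : ℝ → E, Z 0 = x ∧ IsMIntegralCurve (I := modelWithCornersSelf ℝ E) Z G by
    obtain ⟨Z, hZ0, hZ⟩ := h
    refine ⟨Z, hZ0, fun s ↦ ?_⟩
    have hZs : HasFDerivAt Z ((1 : ℝ →L[ℝ] ℝ).smulRight (G (Z s))) s := (hZ s).hasFDerivAt
    exact hasDerivAt_iff_hasFDerivAt.2 hZs
  rw [exists_isMIntegralCurve_iff_exists_isMIntegralCurveOn_Ioo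
    (contMDiff_vectorSpace_iff_contDiff.2 hG)]
  intro a
  obtain ⟨k, hk⟩ := exists_lipschitzOnWith_closedBall_of_contDiff hG x ↑(B * Real.nnabs a)
  have hPL : IsPicardLindelof (fun _ : ℝ ↦ G) (tmin := -|a|) (tmax := |a|)
      ⟨0, by simp⟩ x (B * Real.nnabs a) 0 B k :=
    .of_time_independent (fun y _ ↦ hB y) hk (le_of_eq (by simp))
  obtain ⟨Z, hZ0, hZ⟩ := hPL.exists_eq_forall_mem_Icc_hasDerivWithinAt₀
  refine ⟨Z, hZ0, fun s hs ↦ ?_⟩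
  have hs' : s ∈ Icc (-|a|) |a| :=
    ⟨by linarith [hs.1, le_abs_self a], by linarith [hs.2, le_abs_self a]⟩
  exact ((hZ s hs').mono (Ioo_subset_Icc_self.trans (Icc_subset_Icc (neg_le_neg (le_abs_self a))
    (le_abs_self a)))).hasFDerivWithinAt.hasMFDerivWithinAt

lemma exists_forall_dist_lt_of_contDiff_of_bounded {G : E → E} (hG : ContDiff ℝ 1 G) {B : ℝ}
    (hB : ∀ x, ‖G x‖ ≤ B) {Y : ℝ → E} {b : ℝ} (hb : 0 ≤ b)
    (hY : ∀ s ∈ Icc 0 b, HasDerivAt Y (G (Y s)) s) {ε : ℝ} (hε : 0 < ε) :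
    ∃ δ > 0, ∀ Z : ℝ → E, (∀ s ∈ Icc 0 b, HasDerivAt Z (G (Z s)) s) → dist (Z 0) (Y 0) < δ →
      ∀ s ∈ Icc 0 b, dist (Z s) (Y s) < ε := by
  have hB0 : 0 ≤ B := (norm_nonneg _).trans (hB 0)
  obtain ⟨k, hk⟩ := exists_lipschitzOnWith_closedBall_of_contDiff hG (Y 0) (B * b + 1)
  have hmem : ∀ Z : ℝ → E, (∀ s ∈ Icc 0 b, HasDerivAt Z (G (Z s)) s) → dist (Z 0) (Y 0) ≤ 1 →
      ∀ s ∈ Icc 0 b, Z s ∈ Metric.closedBall (Y 0) (B * b + 1) := fun Z hZ hd s hs ↦ by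
    have h := (convex_Icc 0 b).norm_image_sub_le_of_norm_hasDerivWithin_le
      (fun u hu ↦ (hZ u hu).hasDerivWithinAt) (fun u _ ↦ hB (Z u)) (left_mem_Icc.2 hb) hs
    rw [sub_zero, Real.norm_of_nonneg hs.1, ← dist_eq_norm] at h
    have := mul_le_mul_of_nonneg_left hs.2 hB0
    exact (dist_triangle _ _ _).trans (add_le_add (h.trans this) hd)
  refine ⟨min 1 (ε / exp (k * b)), by positivity, fun Z hZ hd s hs ↦ ?_⟩
  have hgronwall := dist_le_of_trajectories_ODE_of_mem (v := fun _ ↦ G) (fun _ _ ↦ hk)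
    (fun u hu ↦ (hZ u hu).continuousAt.continuousWithinAt)
    (fun u hu ↦ (hZ u (Ico_subset_Icc_self hu)).hasDerivWithinAt)
    (fun u hu ↦ hmem Z hZ (hd.le.trans (min_le_left _ _)) u (Ico_subset_Icc_self hu))
    (fun u hu ↦ (hY u hu).continuousAt.continuousWithinAt)
    (fun u hu ↦ (hY u (Ico_subset_Icc_self hu)).hasDerivWithinAt)
    (fun u hu ↦ hmem Y hY (by simp) u (Ico_subset_Icc_self hu)) le_rfl s hs
  rw [sub_zero] at hgronwall
  calc dist (Z s) (Y s) ≤ dist (Z 0) (Y 0) * exp (k * s) := hgronwall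
    _ ≤ dist (Z 0) (Y 0) * exp (k * b) := by gcongr; exact hs.2
    _ < ε := (lt_div_iff₀ (exp_pos _)).1 (hd.trans_le (min_le_right _ _))

lemma exists_contDiff_bounded_eqOn {v : E → E} {s t O : Set E} (hO : IsOpen O)
    (hv : ContDiffOn ℝ 1 v O) (hs : IsClosed s) (hst : s ⊆ interior t) (ht : IsClosed t)
    (htO : t ⊆ O) {B : ℝ} (hB : ∀ x ∈ t, ‖v x‖ ≤ B) :
    ∃ G : E → E, ContDiff ℝ 1 G ∧ (∀ x, ‖G x‖ ≤ |B|) ∧ EqOn G v s := by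
  obtain ⟨χ, hχ_one, hχ_zero, hχ_mem⟩ :=
    exists_contMDiffMap_one_nhds_of_subset_interior (n := 1) (modelWithCornersSelf ℝ E) hs hst
  refine ⟨fun x ↦ χ x • v x, contDiff_iff_contDiffAt.2 fun x ↦ ?_, fun x ↦ ?_, fun x hx ↦ ?_⟩
  · by_cases hx : x ∈ O
    · exact χ.contMDiff.contDiff.contDiffAt.smul (hv.contDiffAt (hO.mem_nhds hx))
    · refine (contDiffAt_const (c := (0 : E))).congr_of_eventuallyEq ?_
      filter_upwards [ht.isOpen_compl.mem_nhds fun h ↦ hx (htO h)] with y hy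
      rw [hχ_zero y hy, zero_smul]
  · by_cases hx : x ∈ t
    · rw [norm_smul, Real.norm_of_nonneg (hχ_mem x).1]
      exact (mul_le_of_le_one_left (norm_nonneg _) (hχ_mem x).2).trans
        ((hB x hx).trans (le_abs_self B))
    · simp only [hχ_zero x hx, zero_smul, norm_zero, abs_nonneg]
  · simp only [(hχ_one.filter_mono (nhds_le_nhdsSet hx)).self_of_nhds, one_smul]

end IntegralCurves

section Trapping

lemma forall_mem_of_bootstrap {X : Type*} [TopologicalSpace X] {f : ℝ → X} {a : ℝ} {O F : Set X}
    (hf : ContinuousOn f (Ici a)) (hO : IsOpen O) (hF : IsClosed F) (hOF : O ⊆ F) (ha : f a ∈ F)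
    (h : ∀ b ≥ a, (∀ s ∈ Icc a b, f s ∈ F) → f b ∈ O) : ∀ b ≥ a, f b ∈ O := by
  intro b hab
  by_contra hb
  have hcont : ContinuousOn f (Icc a b) := hf.mono Icc_subset_Ici_self
  have hclosed : IsClosed (Icc a b ∩ f ⁻¹' Oᶜ) :=
    hcont.preimage_isClosed_of_isClosed isClosed_Icc hO.isClosed_compl
  obtain ⟨e, ⟨⟨hae, heb⟩, heO⟩, hleast⟩ :=
    (isCompact_Icc.of_isClosed_subset hclosed inter_subset_left).exists_isLeast
      ⟨b, right_mem_Icc.2 hab, hb⟩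
  have hbefore : ∀ s ∈ Ico a e, f s ∈ F := fun s hs ↦ hOF <| by
    by_contra hsO
    exact hs.2.not_ge (hleast ⟨⟨hs.1, hs.2.le.trans heb⟩, hsO⟩)
  refine heO (h e hae fun s hs ↦ ?_)
  rcases hs.2.lt_or_eq with hse | rfl
  · exact hbefore s ⟨hs.1, hse⟩
  rcases hae.eq_or_lt with rfl | hae'
  · exact ha
  rw [← hF.closure_eq]
  refine ((hf s hae).mono Ico_subset_Ici_self).mem_closure ?_ hbefore
  rw [closure_Ico hae'.ne]
  exact hs

variable {F : Type*} [NormedAddCommGroup F] [NormedSpace ℝ F]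

lemma mul_sub_le_sub_of_le_hasDerivAt {f f' : ℝ → ℝ} {a b c : ℝ} (hab : a ≤ b)
    (hf : ∀ s ∈ Icc a b, HasDerivAt f (f' s) s) (hc : ∀ s ∈ Icc a b, c ≤ f' s) :
    c * (b - a) ≤ f b - f a :=
  (convex_Icc a b).mul_sub_le_image_sub_of_le_deriv
    (fun s hs ↦ (hf s hs).continuousAt.continuousWithinAt)
    (fun s hs ↦ (hf s (interior_subset hs)).differentiableAt.differentiableWithinAt)
    (fun s hs ↦ (hf s (interior_subset hs)).deriv ▸ hc s (interior_subset hs))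
    a (left_mem_Icc.2 hab) b (right_mem_Icc.2 hab) hab

lemma norm_sub_le_of_norm_deriv_le_rpow {μ c C a b : ℝ} (hμ : 0 < μ) (hc : 0 < c) (hC : 0 ≤ C)
    (hab : a ≤ b) {r r' : ℝ → ℝ} {y y' : ℝ → F} (hr : ∀ s ∈ Icc a b, HasDerivAt r (r' s) s)
    (hy : ∀ s ∈ Icc a b, HasDerivAt y (y' s) s) (hr0 : ∀ s ∈ Icc a b, 0 < r s)
    (hr' : ∀ s ∈ Icc a b, c ≤ r' s) (hy' : ∀ s ∈ Icc a b, ‖y' s‖ ≤ C * r s ^ (-1 - μ)) :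
    ‖y b - y a‖ ≤ C / (μ * c) * r a ^ (-μ) := by
  have hB : ∀ s ∈ Icc a b, HasDerivAt (fun s ↦ C / (μ * c) * (r a ^ (-μ) - r s ^ (-μ)))
      (C / c * r' s * r s ^ (-1 - μ)) s := fun s hs ↦ by
    refine ((((hr s hs).rpow_const (p := -μ) (.inl (hr0 s hs).ne')).const_sub
      (r a ^ (-μ))).const_mul (C / (μ * c))).congr_deriv ?_
    rw [show -μ - 1 = -1 - μ by ring]
    field_simp
  have hdom := image_norm_le_of_norm_deriv_right_le_deriv_boundary' (f := fun s ↦ y s - y a)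
    (fun s hs ↦ (hy s hs).continuousAt.continuousWithinAt.sub continuousWithinAt_const)
    (fun s hs ↦ ((hy s (Ico_subset_Icc_self hs)).sub_const _).hasDerivWithinAt) (by simp)
    (fun s hs ↦ (hB s hs).continuousAt.continuousWithinAt)
    (fun s hs ↦ (hB s (Ico_subset_Icc_self hs)).hasDerivWithinAt) (fun s hs ↦ by
      have hs := Ico_subset_Icc_self hs
      refine (hy' s hs).trans (mul_le_mul_of_nonneg_right ?_ (rpow_nonneg (hr0 s hs).le _))
      calc C = C / c * c := by field_simp
        _ ≤ C / c * r' s := by gcongr; exact hr' s hs) (right_mem_Icc.2 hab)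
  refine hdom.trans (mul_le_mul_of_nonneg_left ?_ (by positivity))
  exact sub_le_self _ (rpow_nonneg (hr0 b (right_mem_Icc.2 hab)).le _)

lemma forall_radius_ge_and_dist_lt_of_outgoing {μ c C R δ a : ℝ} (hμ : 0 < μ) (hc : 0 < c)
    (hC : 0 ≤ C) (hR : 0 < R) {w : ℝ × F → ℝ × F} {q : F}
    (hw : ∀ z : ℝ × F, R ≤ z.1 → dist z.2 q ≤ δ → c ≤ (w z).1 ∧ ‖(w z).2‖ ≤ C * z.1 ^ (-1 - μ))
    {Z : ℝ → ℝ × F} (hZ : ∀ s ≥ a, HasDerivAt Z (w (Z s)) s) (hRa : R < (Z a).1)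
    (hδ : dist (Z a).2 q + C / (μ * c) * (Z a).1 ^ (-μ) < δ) :
    ∀ s ≥ a, (Z a).1 + c * (s - a) ≤ (Z s).1 ∧ dist (Z s).2 q < δ := by
  have hgrow : ∀ b ≥ a, (∀ s ∈ Icc a b, Z s ∈ Ici R ×ˢ Metric.closedBall q δ) →
      (Z a).1 + c * (b - a) ≤ (Z b).1 ∧ dist (Z b).2 q < δ := fun b hab hin ↦ by
    have hr : ∀ s ∈ Icc a b, HasDerivAt (fun s ↦ (Z s).1) (w (Z s)).1 s :=
      fun s hs ↦ (hZ s hs.1).fst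
    have hw' : ∀ s ∈ Icc a b, c ≤ (w (Z s)).1 ∧ ‖(w (Z s)).2‖ ≤ C * (Z s).1 ^ (-1 - μ) :=
      fun s hs ↦ hw _ (hin s hs).1 (hin s hs).2
    have hinc := norm_sub_le_of_norm_deriv_le_rpow hμ hc hC hab hr
      (fun s hs ↦ (hZ s hs.1).snd) (fun s hs ↦ hR.trans_le (hin s hs).1)
      (fun s hs ↦ (hw' s hs).1) (fun s hs ↦ (hw' s hs).2)
    have hlin := mul_sub_le_sub_of_le_hasDerivAt hab hr fun s hs ↦ (hw' s hs).1
    rw [← dist_eq_norm] at hinc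
    exact ⟨by linarith, by linarith [dist_triangle (Z b).2 (Z a).2 q]⟩
  have hstay : ∀ b ≥ a, Z b ∈ Ioi R ×ˢ Metric.ball q δ := by
    refine forall_mem_of_bootstrap (fun s hs ↦ (hZ s hs).continuousAt.continuousWithinAt)
      (isOpen_Ioi.prod Metric.isOpen_ball) (isClosed_Ici.prod Metric.isClosed_closedBall)
      (prod_mono Ioi_subset_Ici_self Metric.ball_subset_closedBall) ⟨hRa.le, ?_⟩
      fun b hab hin ↦ ⟨?_, (hgrow b hab hin).2⟩
    · have : 0 ≤ C / (μ * c) * (Z a).1 ^ (-μ) :=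
        mul_nonneg (by positivity) (rpow_nonneg (hR.trans hRa).le _)
      exact Metric.mem_closedBall.2 (by linarith)
    · have := mul_nonneg hc.le (sub_nonneg.2 hab)
      exact hRa.trans_le (by linarith [(hgrow b hab hin).1])
  exact fun s hs ↦ hgrow s hs fun u hu ↦
    prod_mono Ioi_subset_Ici_self Metric.ball_subset_closedBall (hstay u hu.1)

end Trapping

section EscapingCurves

variable {F : Type*} [NormedAddCommGroup F] [NormedSpace ℝ F]
  {v : ℝ × F → ℝ × F} {g : F → ℝ} {Ω Q : Set F} {μ : ℝ}

/-- A vector field `v` on the end `(1, ∞) × Ω` is asymptotically radial with radial speed `g` if,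
locally uniformly in `y ∈ Ω`, it is `(g y + O(r ^ (-μ)), O(r ^ (-1 - μ)))` at `(r, y)`. For `μ > 0`
the second component is integrable along curves escaping at a linear rate. -/
structure IsAsymptoticallyRadial (v : ℝ × F → ℝ × F) (g : F → ℝ) (Ω : Set F) (μ : ℝ) :
    Prop where
  contDiffOn : ContDiffOn ℝ 1 v (Ioi 1 ×ˢ Ω)
  continuousOn : ContinuousOn g Ω
  fst_isBigO : ∀ Q ⊆ Ω, IsCompact Q →
    (fun z ↦ (v z).1 - g z.2) =O[𝓟 (Ioi 1 ×ˢ Q)] fun z ↦ z.1 ^ (-μ)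
  snd_isBigO : ∀ Q ⊆ Ω, IsCompact Q →
    (fun z ↦ (v z).2) =O[𝓟 (Ioi 1 ×ˢ Q)] fun z ↦ z.1 ^ (-1 - μ)

lemma eventually_const_mul_rpow_neg_lt (hμ : 0 < μ) (A : ℝ) {ε : ℝ} (hε : 0 < ε) :
    ∀ᶠ x : ℝ in atTop, A * x ^ (-μ) < ε :=
  ((tendsto_rpow_neg_atTop hμ).const_mul A).eventually_lt_const (by simpa only [mul_zero])

namespace IsAsymptoticallyRadial

lemma exists_norm_le (h : IsAsymptoticallyRadial v g Ω μ) (hμ : 0 < μ) (hQ : IsCompact Q)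
    (hQΩ : Q ⊆ Ω) : ∃ B, ∀ z ∈ Ioi 1 ×ˢ Q, ‖v z‖ ≤ B := by
  have hpow : ∀ ν ≤ (0 : ℝ), (fun z : ℝ × F ↦ z.1 ^ ν) =O[𝓟 (Ioi 1 ×ˢ Q)] fun _ ↦ (1 : ℝ) :=
    fun ν hν ↦ .of_bound 1 <| eventually_principal.2 fun z hz ↦ by
      rw [norm_one, mul_one, Real.norm_of_nonneg (rpow_nonneg (zero_le_one.trans hz.1.le) _)]
      exact rpow_le_one_of_one_le_of_nonpos hz.1.le hν
  obtain ⟨B, hB⟩ := hQ.exists_bound_of_continuousOn (h.continuousOn.mono hQΩ)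
  have hg : (fun z : ℝ × F ↦ g z.2) =O[𝓟 (Ioi 1 ×ˢ Q)] fun _ ↦ (1 : ℝ) :=
    .of_bound B <| eventually_principal.2 fun z hz ↦ by simpa using hB z.2 hz.2
  have hfst := ((h.fst_isBigO Q hQΩ hQ).trans (hpow _ (by linarith))).add hg
  simp only [sub_add_cancel] at hfst
  obtain ⟨C, hC⟩ := Asymptotics.isBigO_principal.1
    (hfst.prod_left ((h.snd_isBigO Q hQΩ hQ).trans (hpow _ (by linarith))))
  exact ⟨C, fun z hz ↦ by simpa using hC z hz⟩

variable [FiniteDimensional ℝ F]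

lemma exists_contDiff_bounded_eqOn (h : IsAsymptoticallyRadial v g Ω μ) (hμ : 0 < μ)
    (hΩ : IsOpen Ω) (hQ : IsCompact Q) (hQΩ : Q ⊆ Ω) {r₀ : ℝ} (hr₀ : 1 < r₀) :
    ∃ G : ℝ × F → ℝ × F, ContDiff ℝ 1 G ∧ (∃ B, ∀ z, ‖G z‖ ≤ B) ∧ EqOn G v (Ici r₀ ×ˢ Q) := by
  have : ProperSpace F := FiniteDimensional.proper ℝ F
  obtain ⟨L, hL, hQL, hLΩ⟩ := exists_compact_between hQ hΩ hQΩ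
  obtain ⟨B, hB⟩ := h.exists_norm_le hμ hL hLΩ
  obtain ⟨r₁, hr₁, hr₁₀⟩ := exists_between hr₀
  have hsub : Ici r₁ ×ˢ L ⊆ Ioi 1 ×ˢ L := prod_mono (Ici_subset_Ioi.2 hr₁) Subset.rfl
  obtain ⟨G, hG, hGB, hGv⟩ := Scattering.exists_contDiff_bounded_eqOn
    (isOpen_Ioi.prod hΩ) h.contDiffOn (isClosed_Ici.prod hQ.isClosed)
    (t := Ici r₁ ×ˢ L) (by
      rw [interior_prod_eq, interior_Ici]
      exact prod_mono (Ici_subset_Ioi.2 hr₁₀) hQL)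
    (isClosed_Ici.prod hL.isClosed) (hsub.trans (prod_mono Subset.rfl hLΩ))
    fun z hz ↦ hB z (hsub hz)
  exact ⟨G, hG, ⟨_, hGB⟩, hGv⟩

lemma exists_outgoing_region (h : IsAsymptoticallyRadial v g Ω μ) (hμ : 0 < μ) (hΩ : IsOpen Ω)
    (hQ : IsCompact Q) (hQΩ : Q ⊆ Ω) {c : ℝ} (hc : 0 < c) :
    ∃ δ > 0, ∃ R > 1, ∃ C ≥ 0, Metric.cthickening δ Q ⊆ Ω ∧
      ∀ q ∈ Q, c ≤ g q → ∀ z : ℝ × F, R ≤ z.1 → dist z.2 q ≤ δ →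
        c / 2 ≤ (v z).1 ∧ ‖(v z).2‖ ≤ C * z.1 ^ (-1 - μ) := by
  have : ProperSpace F := FiniteDimensional.proper ℝ F
  obtain ⟨δ₀, hδ₀, hδ₀Ω⟩ := hQ.exists_cthickening_subset_open hΩ hQΩ
  have hunif := Metric.mem_uniformity_dist.1 (hQ.uniformContinuousAt_of_continuousAt g
    (fun q hq ↦ h.continuousOn.continuousAt (hΩ.mem_nhds (hQΩ hq)))
    (Metric.dist_mem_uniformity (show 0 < c / 4 by positivity)))
  obtain ⟨η, hη, hgη⟩ := hunif
  obtain ⟨A, hA⟩ := Asymptotics.isBigO_principal.1 (h.fst_isBigO _ hδ₀Ω hQ.cthickening)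
  obtain ⟨C, hC⟩ := Asymptotics.isBigO_principal.1 (h.snd_isBigO _ hδ₀Ω hQ.cthickening)
  obtain ⟨R, hR⟩ := eventually_atTop.1 ((eventually_const_mul_rpow_neg_lt hμ A
    (show 0 < c / 4 by positivity)).and (eventually_gt_atTop 1))
  refine ⟨min δ₀ (η / 2), by positivity, R, (hR R le_rfl).2, |C|, abs_nonneg C,
    (Metric.cthickening_mono (min_le_left _ _) Q).trans hδ₀Ω, fun q hq hgq z hz hzq ↦ ?_⟩
  obtain ⟨hRz, hz1⟩ := hR z.1 hz
  have hzmem : z ∈ Ioi 1 ×ˢ Metric.cthickening δ₀ Q :=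
    ⟨hz1, Metric.mem_cthickening_of_dist_le _ q _ _ hq (hzq.trans (min_le_left _ _))⟩
  have hpos : ∀ ν : ℝ, 0 ≤ z.1 ^ ν := rpow_nonneg (zero_le_one.trans hz1.le)
  have hspeed := hA z hzmem
  have hdrift := hC z hzmem
  rw [Real.norm_of_nonneg (hpos _)] at hspeed hdrift
  have hgz : dist (g q) (g z.2) < c / 4 := hgη (by
    rw [dist_comm]; linarith [hzq.trans (min_le_right _ _)]) hq
  rw [Real.dist_eq] at hgz
  exact ⟨by linarith [(abs_lt.1 hgz).2, (abs_le.1 hspeed).1],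
    hdrift.trans (mul_le_mul_of_nonneg_right (le_abs_self C) (hpos _))⟩

end IsAsymptoticallyRadial

lemma exists_gt_forall_gt_of_tendsto_atTop {r : ℝ → ℝ} {a A : ℝ} (hr : ContinuousOn r (Ici a))
    (hA : ∀ s ≥ a, A < r s) (hlim : Tendsto r atTop atTop) : ∃ A' > A, ∀ s ≥ a, A' < r s := by
  obtain ⟨b, hb⟩ := eventually_atTop.1 (hlim.eventually_ge_atTop (A + 1))
  obtain ⟨x, hx, hmin⟩ := isCompact_Icc.exists_isMinOn (nonempty_Icc.2 (le_max_left a b))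
    (hr.mono Icc_subset_Ici_self)
  obtain ⟨A', hAA', hA'⟩ := exists_between (lt_min (hA x hx.1) (lt_add_one A))
  refine ⟨A', hAA', fun s hs ↦ ?_⟩
  rcases le_total s (max a b) with hsb | hsb
  · exact hA'.trans_le ((min_le_left _ _).trans (hmin ⟨hs, hsb⟩))
  · exact hA'.trans_le ((min_le_right _ _).trans (hb s ((le_max_right a b).trans hsb)))

lemma forall_mem_cthickening_and_radius_ge_of_shadow {γ Z : ℝ → ℝ × F} {G : ℝ × F → ℝ × F}
    {A b c C r₀ R δ : ℝ} (hμ : 0 < μ) (hb : 0 ≤ b) (hc : 0 < c) (hC : 0 ≤ C) (hR : 0 < R)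
    (hr₀R : r₀ ≤ R) (hγ : ∀ s ≥ 0, γ s ∈ Ioi A ×ˢ Q) (hZ : ∀ s, HasDerivAt Z (G (Z s)) s)
    (hshadow : ∀ s ∈ Icc 0 b, dist (Z s) (γ s) < min (δ / 2) (min 1 (A - r₀)))
    (hout : ∀ z : ℝ × F, R ≤ z.1 → dist z.2 (γ b).2 ≤ δ →
      c ≤ (G z).1 ∧ ‖(G z).2‖ ≤ C * z.1 ^ (-1 - μ))
    (hfar : ∀ x ≥ (γ b).1 - 1, C / (μ * c) * x ^ (-μ) < δ / 2 ∧ R < x) :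
    (∀ s ≥ 0, Z s ∈ Ici r₀ ×ˢ Metric.cthickening δ Q) ∧ ∀ s ≥ b, c * (s - b) ≤ (Z s).1 := by
  have hnear : ∀ s ∈ Icc 0 b, dist (Z s).2 (γ s).2 < δ / 2 ∧
      (γ s).1 - 1 < (Z s).1 ∧ (γ s).1 - (A - r₀) < (Z s).1 := fun s hs ↦ by
    have hs := hshadow s hs
    rw [Prod.dist_eq, max_lt_iff, Real.dist_eq, lt_min_iff, lt_min_iff, lt_min_iff] at hs
    exact ⟨hs.2.1, by linarith [(abs_lt.1 hs.1.2.1).1], by linarith [(abs_lt.1 hs.1.2.2).1]⟩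
  obtain ⟨hyb, hrb, -⟩ := hnear b (right_mem_Icc.2 hb)
  obtain ⟨hdrift, hRb⟩ := hfar (Z b).1 hrb.le
  have htrap := forall_radius_ge_and_dist_lt_of_outgoing hμ hc hC hR hout (fun s _ ↦ hZ s) hRb
    (by linarith)
  have hgrow : ∀ s ≥ b, R + c * (s - b) ≤ (Z s).1 := fun s hs ↦ by linarith [(htrap s hs).1]
  refine ⟨fun s hs ↦ ?_, fun s hs ↦ by linarith [hgrow s hs]⟩
  rcases le_total s b with hsb | hsb
  · obtain ⟨hy, -, hr⟩ := hnear s ⟨hs, hsb⟩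
    have hγA : A < (γ s).1 := (hγ s hs).1
    exact ⟨mem_Ici.2 (by linarith),
      Metric.mem_cthickening_of_dist_le _ _ _ _ (hγ s hs).2 (by linarith [dist_nonneg.trans_lt hy])⟩
  · have := mul_nonneg hc.le (sub_nonneg.2 hsb)
    exact ⟨mem_Ici.2 (by linarith [hgrow s hsb]),
      Metric.mem_cthickening_of_dist_le _ _ _ _ (hγ b hb).2 (htrap s hsb).2.le⟩

lemma IsAsymptoticallyRadial.exists_nhds_forall_escape [FiniteDimensional ℝ F]
    (h : IsAsymptoticallyRadial v g Ω μ) (hμ : 0 < μ) (hΩ : IsOpen Ω) (hQ : IsCompact Q)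
    (hQΩ : Q ⊆ Ω) {γ : ℝ → ℝ × F} (hγ : ∀ s ≥ 0, HasDerivAt γ (v (γ s)) s)
    (hγQ : ∀ s ≥ 0, γ s ∈ Ioi 1 ×ˢ Q) (hesc : Tendsto (fun s ↦ (γ s).1) atTop atTop)
    {c : ℝ} (hc : 0 < c) (hgc : ∀ᶠ s in atTop, c ≤ g (γ s).2) :
    ∃ V ∈ 𝓝 (γ 0), ∃ κ > 0, ∃ b : ℝ, ∀ z ∈ V, ∃ Z : ℝ → ℝ × F, Z 0 = z ∧
      (∀ s ≥ 0, Z s ∈ Ioi 1 ×ˢ Ω ∧ HasDerivAt Z (v (Z s)) s) ∧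
      ∀ s ≥ b, κ * (s - b) ≤ (Z s).1 := by
  have : ProperSpace F := FiniteDimensional.proper ℝ F
  obtain ⟨δ, hδ, R, hR, C, hC, hδΩ, hout⟩ := h.exists_outgoing_region hμ hΩ hQ hQΩ hc
  obtain ⟨A, hA, hγA⟩ := exists_gt_forall_gt_of_tendsto_atTop
    (fun s hs ↦ (hγ s hs).continuousAt.fst.continuousWithinAt) (fun s hs ↦ (hγQ s hs).1) hesc
  obtain ⟨r₀, hr₀, hr₀AR⟩ := exists_between (lt_min hA hR)
  obtain ⟨hr₀A, hr₀R⟩ := lt_min_iff.1 hr₀AR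
  obtain ⟨G, hG, ⟨B, hB⟩, hGv⟩ := h.exists_contDiff_bounded_eqOn hμ hΩ hQ.cthickening hδΩ hr₀
  obtain ⟨R₁, hR₁⟩ := eventually_atTop.1 ((eventually_const_mul_rpow_neg_lt hμ
    (C / (μ * (c / 2))) (half_pos hδ)).and (eventually_gt_atTop R))
  obtain ⟨b, hb, hbR₁, hbg⟩ := ((eventually_ge_atTop 0).and
    ((hesc.eventually_ge_atTop (R₁ + 1)).and hgc)).exists
  obtain ⟨ε, hε, hshadow⟩ := exists_forall_dist_lt_of_contDiff_of_bounded hG hB hb (Y := γ)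
    (fun s hs ↦ hGv ⟨hr₀A.le.trans (hγA s hs.1).le,
      Metric.self_subset_cthickening Q (hγQ s hs.1).2⟩ ▸ hγ s hs.1)
    (lt_min (half_pos hδ) (lt_min one_pos (sub_pos.2 hr₀A)))
  refine ⟨Metric.ball (γ 0) ε, Metric.ball_mem_nhds _ hε, c / 2, half_pos hc, b, fun z hz ↦ ?_⟩
  obtain ⟨Z, rfl, hZ⟩ := exists_hasDerivAt_of_contDiff_of_bounded hG hB z
  obtain ⟨hmem, hgrow⟩ := forall_mem_cthickening_and_radius_ge_of_shadow hμ hb (half_pos hc) hC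
    (zero_lt_one.trans hR) hr₀R.le (fun s hs ↦ ⟨hγA s hs, (hγQ s hs).2⟩) hZ
    (hshadow Z (fun s _ ↦ hZ s) hz) (fun w hw hwq ↦ by
      rw [hGv ⟨hr₀R.le.trans hw, Metric.mem_cthickening_of_dist_le _ _ _ _ (hγQ b hb).2 hwq⟩]
      exact hout _ (hγQ b hb).2 hbg w hw hwq)
    fun x hx ↦ hR₁ x (by linarith)
  exact ⟨Z, rfl, fun s hs ↦ ⟨⟨hr₀.trans_le (hmem s hs).1, hδΩ (hmem s hs).2⟩,
    hGv (hmem s hs) ▸ hZ s⟩, hgrow⟩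

end EscapingCurves

section DotProduct

open scoped Matrix

variable {ι α : Type*} [Fintype ι]

lemma hasDerivAt_dotProduct {u v : ℝ → ι → ℝ} {u' v' : ι → ℝ} {s : ℝ}
    (hu : ∀ i, HasDerivAt (fun s ↦ u s i) (u' i) s)
    (hv : ∀ i, HasDerivAt (fun s ↦ v s i) (v' i) s) :
    HasDerivAt (fun s ↦ u s ⬝ᵥ v s) (u' ⬝ᵥ v s + u s ⬝ᵥ v') s := by
  simp only [dotProduct, ← Finset.sum_add_distrib]
  exact .fun_sum fun i _ ↦ (hu i).mul (hv i)

lemma hasDerivAt_dotProduct_mulVec {A : ℝ → Matrix ι ι ℝ} {A' : Matrix ι ι ℝ}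
    {v : ℝ → ι → ℝ} {v' : ι → ℝ} {s : ℝ} (hsymm : (A s).IsSymm)
    (hA : ∀ i j, HasDerivAt (fun s ↦ A s i j) (A' i j) s)
    (hv : ∀ i, HasDerivAt (fun s ↦ v s i) (v' i) s) :
    HasDerivAt (fun s ↦ v s ⬝ᵥ A s *ᵥ v s) (v s ⬝ᵥ A' *ᵥ v s + 2 * (v' ⬝ᵥ A s *ᵥ v s)) s := by
  refine (hasDerivAt_dotProduct hv fun i ↦ hasDerivAt_dotProduct (hA i) hv).congr_deriv ?_
  have hswap : v s ⬝ᵥ A s *ᵥ v' = v' ⬝ᵥ A s *ᵥ v s := by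
    rw [Matrix.dotProduct_mulVec, ← Matrix.mulVec_transpose, hsymm.eq, dotProduct_comm]
  change v' ⬝ᵥ A s *ᵥ v s + v s ⬝ᵥ (A' *ᵥ v s + A s *ᵥ v') = _
  rw [dotProduct_add, hswap]
  ring

variable {l : Filter α} {f g : α → ℝ}

lemma isBigO_dotProduct {u v : α → ι → ℝ} (hu : u =O[l] f) (hv : v =O[l] g) :
    (fun x ↦ u x ⬝ᵥ v x) =O[l] fun x ↦ f x * g x :=
  .fun_sum fun i _ ↦ (Asymptotics.isBigO_pi.1 hu i).mul (Asymptotics.isBigO_pi.1 hv i)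

lemma isBigO_mulVec {A : α → Matrix ι ι ℝ} {v : α → ι → ℝ}
    (hA : ∀ i j, (fun x ↦ A x i j) =O[l] f) (hv : v =O[l] g) :
    (fun x ↦ A x *ᵥ v x) =O[l] fun x ↦ f x * g x :=
  Asymptotics.isBigO_pi.2 fun i ↦ isBigO_dotProduct (Asymptotics.isBigO_pi.2 (hA i)) hv

end DotProduct

section HamiltonianField

open scoped Matrix

variable {m : ℕ} {μ : ℝ} {U K : Set (Fin m → ℝ)}

/-- The part of phase space over the end `(1, ∞) × K`. -/
def phaseEnd (K : Set (Fin m → ℝ)) : Set (Phase m) := Ioi 1 ×ˢ K ×ˢ univ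

lemma isOpen_phaseEnd (hU : IsOpen U) : IsOpen (phaseEnd U) :=
  isOpen_Ioi.prod (hU.prod isOpen_univ)

namespace Coeffs

variable (c : Coeffs m μ U)

/-- The energy as a function of the phase space point. -/
noncomputable def hamiltonian (z : Phase m) : ℝ := c.p z.1 z.2.1 z.2.2.1 z.2.2.2

/-- The Hamiltonian vector field `(∂p/∂ρ, ∂p/∂ω, -∂p/∂r, -∂p/∂θ)`. -/
noncomputable def hamField (z : Phase m) : Phase m :=
  (pdRho c.p z.1 z.2.1 z.2.2.1 z.2.2.2, fun j ↦ pdOmega c.p j z.1 z.2.1 z.2.2.1 z.2.2.2,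
    -pdR c.p z.1 z.2.1 z.2.2.1 z.2.2.2, fun j ↦ -pdTheta c.p j z.1 z.2.1 z.2.2.1 z.2.2.2)

lemma isHamSolOn_iff {Z : ℝ → Phase m} {I : Set ℝ} :
    IsHamSolOn c.p (fun t ↦ (Z t).1) (fun t ↦ (Z t).2.1) (fun t ↦ (Z t).2.2.1)
      (fun t ↦ (Z t).2.2.2) I ↔ ∀ t ∈ I, HasDerivAt Z (c.hamField (Z t)) t := by
  refine forall₂_congr fun t _ ↦ ⟨fun ⟨hr, hθ, hρ, hω⟩ ↦ ?_, fun h ↦ ⟨h.fst, ?_, ?_, ?_⟩⟩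
  · exact hr.prodMk ((hasDerivAt_pi.2 hθ).prodMk (hρ.prodMk (hasDerivAt_pi.2 hω)))
  · exact hasDerivAt_pi.1 h.snd.fst
  · exact h.snd.snd.fst
  · exact hasDerivAt_pi.1 h.snd.snd.snd

lemma p_eq (r : ℝ) (θ : Fin m → ℝ) (ρ : ℝ) (ω : Fin m → ℝ) :
    c.p r θ ρ ω = ρ ^ 2 + (ω ⬝ᵥ c.hM θ *ᵥ ω) / r ^ 2 + c.a0 r θ * ρ ^ 2
      + ρ * (c.a1 r θ ⬝ᵥ ω) / r + (ω ⬝ᵥ c.a2 r θ *ᵥ ω) / r ^ 2 := by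
  simp only [p, energy, dotProduct, Matrix.mulVec, Finset.mul_sum, mul_assoc,
    mul_left_comm]

lemma contDiffOn_hamiltonian : ContDiffOn ℝ (⊤ : ℕ∞) c.hamiltonian (phaseEnd U) := by
  have hbase : ContDiffOn ℝ (⊤ : ℕ∞) (fun z : Phase m ↦ (z.1, z.2.1)) (phaseEnd U) := by fun_prop
  have hmaps : MapsTo (fun z : Phase m ↦ (z.1, z.2.1)) (phaseEnd U) (Ioi 1 ×ˢ U) :=
    fun z hz ↦ ⟨hz.1, hz.2.1⟩
  have hh (j k) : ContDiffOn ℝ (⊤ : ℕ∞) (fun z : Phase m ↦ c.hM z.2.1 j k) (phaseEnd U) :=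
    (c.hM_smooth j k).comp (f := fun z : Phase m ↦ z.2.1) (by fun_prop) fun z hz ↦ hz.2.1
  have h0 := c.a0_smooth.comp hbase hmaps
  have h1 (j) := (c.a1_smooth j).comp hbase hmaps
  have h2 (j k) := (c.a2_smooth j k).comp hbase hmaps
  have hr : ∀ z ∈ phaseEnd U, z.1 ≠ 0 := fun z hz ↦ (zero_lt_one.trans hz.1).ne'
  unfold hamiltonian p energy
  simp only [Function.comp_def] at h0 h1 h2
  refine .add (.add (.add (.add ?_ (.div ?_ ?_ fun z hz ↦ pow_ne_zero 2 (hr z hz))) ?_)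
    (.div ?_ ?_ hr)) (.div ?_ ?_ fun z hz ↦ pow_ne_zero 2 (hr z hz)) <;> fun_prop

lemma differentiableAt_hamiltonian (hU : IsOpen U) {z : Phase m} (hz : z ∈ phaseEnd U) :
    DifferentiableAt ℝ c.hamiltonian z :=
  (c.contDiffOn_hamiltonian.contDiffAt ((isOpen_phaseEnd hU).mem_nhds hz)).differentiableAt
    (by simp)

lemma hamField_eq_fderiv (hU : IsOpen U) {z : Phase m} (hz : z ∈ phaseEnd U) :
    c.hamField z = (fderiv ℝ c.hamiltonian z (0, 0, 1, 0),
      fun j ↦ fderiv ℝ c.hamiltonian z (0, 0, 0, Pi.single j 1),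
      -fderiv ℝ c.hamiltonian z (1, 0, 0, 0),
      fun j ↦ -fderiv ℝ c.hamiltonian z (0, Pi.single j 1, 0, 0)) := by
  have hd := (c.differentiableAt_hamiltonian hU hz).hasFDerivAt
  obtain ⟨r, θ, ρ, ω⟩ := z
  have hρ : HasDerivAt (fun s : ℝ ↦ ((r, θ, s, ω) : Phase m)) (0, 0, 1, 0) ρ :=
    (hasDerivAt_const _ _).prodMk ((hasDerivAt_const _ _).prodMk
      ((hasDerivAt_id ρ).prodMk (hasDerivAt_const _ _)))
  have hr : HasDerivAt (fun s : ℝ ↦ ((s, θ, ρ, ω) : Phase m)) (1, 0, 0, 0) r :=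
    (hasDerivAt_id r).prodMk (hasDerivAt_const _ _)
  have hω := (hasFDerivAt_const (𝕜 := ℝ) r ω).prodMk ((hasFDerivAt_const (𝕜 := ℝ) θ ω).prodMk
    ((hasFDerivAt_const (𝕜 := ℝ) ρ ω).prodMk (hasFDerivAt_id (𝕜 := ℝ) ω)))
  have hθ := (hasFDerivAt_const (𝕜 := ℝ) r θ).prodMk
    ((hasFDerivAt_id (𝕜 := ℝ) θ).prodMk (hasFDerivAt_const (𝕜 := ℝ) (ρ, ω) θ))
  refine Prod.ext ?_ (Prod.ext (funext fun j ↦ ?_) (Prod.ext ?_ (funext fun j ↦ ?_)))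
  · exact (hd.comp_hasDerivAt ρ hρ).deriv
  · exact congrArg (fun L ↦ L (Pi.single j 1)) (HasFDerivAt.comp ω hd hω).fderiv
  · have hpdR := (hd.comp_hasDerivAt r hr).deriv
    exact congrArg Neg.neg hpdR
  · exact congrArg (fun L ↦ -(L (Pi.single j 1))) (HasFDerivAt.comp θ hd hθ).fderiv

lemma contDiffOn_hamField (hU : IsOpen U) : ContDiffOn ℝ 1 c.hamField (phaseEnd U) := by
  have hfderiv (w : Phase m) :
      ContDiffOn ℝ 1 (fun z ↦ fderiv ℝ c.hamiltonian z w) (phaseEnd U) :=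
    (c.contDiffOn_hamiltonian.fderiv_of_isOpen (isOpen_phaseEnd hU) (by norm_cast)).clm_apply
      contDiffOn_const
  refine .congr ?_ fun z hz ↦ c.hamField_eq_fderiv hU hz
  exact (hfderiv _).prodMk ((contDiffOn_pi.2 fun j ↦ hfderiv _).prodMk
    ((hfderiv _).neg.prodMk (contDiffOn_pi.2 fun j ↦ (hfderiv _).neg)))

end Coeffs

end HamiltonianField

section PartialDerivatives

open scoped Matrix

variable {m : ℕ} {μ : ℝ} {U : Set (Fin m → ℝ)} {r : ℝ} {θ : Fin m → ℝ}

lemma differentiableAt_of_contDiffOn_end (hU : IsOpen U) (hr : 1 < r) (hθ : θ ∈ U)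
    {f : ℝ × (Fin m → ℝ) → ℝ} (hf : ContDiffOn ℝ (⊤ : ℕ∞) f (Ioi 1 ×ˢ U)) :
    DifferentiableAt ℝ f (r, θ) :=
  (hf.contDiffAt ((isOpen_Ioi.prod hU).mem_nhds (mk_mem_prod hr hθ))).differentiableAt (by simp)

lemma hasDerivAt_pderivR {f : ℝ → (Fin m → ℝ) → ℝ}
    (hf : DifferentiableAt ℝ (fun z : ℝ × (Fin m → ℝ) ↦ f z.1 z.2) (r, θ)) :
    HasDerivAt (fun s ↦ f s θ) (pderivR f r θ) r :=
  (hf.comp r (f := fun s ↦ (s, θ)) (by fun_prop)).hasDerivAt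

lemma hasLineDerivAt_pderivTheta {f : ℝ → (Fin m → ℝ) → ℝ}
    (hf : DifferentiableAt ℝ (fun z : ℝ × (Fin m → ℝ) ↦ f z.1 z.2) (r, θ)) (l : Fin m) :
    HasLineDerivAt ℝ (f r) (pderivTheta l f r θ) θ (Pi.single l 1) :=
  (hf.comp θ (f := fun θ ↦ (r, θ)) (by fun_prop)).hasFDerivAt.hasLineDerivAt _

namespace Coeffs

variable (c : Coeffs m μ U)

/-- The matrix of derivatives `∂h^{jk}/∂θ_l`. -/
noncomputable def dhM (l : Fin m) (θ : Fin m → ℝ) : Matrix (Fin m) (Fin m) ℝ :=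
  fun j k ↦ fderiv ℝ (fun θ ↦ c.hM θ j k) θ (Pi.single l 1)

lemma pdRho_eq (r : ℝ) (θ : Fin m → ℝ) (ρ : ℝ) (ω : Fin m → ℝ) :
    pdRho c.p r θ ρ ω = 2 * ρ + (2 * (c.a0 r θ * ρ) + c.a1 r θ ⬝ᵥ r⁻¹ • ω) := by
  have hsq : HasDerivAt (fun s : ℝ ↦ s ^ 2) (2 * ρ) ρ := by simpa using hasDerivAt_pow 2 ρ
  have hp := (((hsq.add_const ((ω ⬝ᵥ c.hM θ *ᵥ ω) / r ^ 2)).add (hsq.const_mul (c.a0 r θ))).add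
    (((hasDerivAt_id ρ).mul_const (c.a1 r θ ⬝ᵥ ω)).div_const r)).add_const
    ((ω ⬝ᵥ c.a2 r θ *ᵥ ω) / r ^ 2)
  simp only [pdRho, p_eq]
  refine hp.deriv.trans ?_
  rw [dotProduct_smul, smul_eq_mul]
  ring

variable {c} (hU : IsOpen U) (hr : 1 < r) (hθ : θ ∈ U) (ρ : ℝ) (ω : Fin m → ℝ)
include hU hr hθ

lemma pdOmega_eq (l : Fin m) :
    pdOmega c.p l r θ ρ ω = r⁻¹ ^ 2 * (2 * (c.hM θ *ᵥ ω) l)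
      + r⁻¹ * (ρ * c.a1 r θ l + 2 * (c.a2 r θ *ᵥ r⁻¹ • ω) l) := by
  let e : Fin m → ℝ := Pi.single l 1
  have hline (j : Fin m) : HasDerivAt (fun t : ℝ ↦ (ω + t • e) j) (e j) 0 := by
    simpa using ((hasDerivAt_id (0 : ℝ)).mul_const (e j)).const_add (ω j)
  have hquad {A : Matrix (Fin m) (Fin m) ℝ} (hA : A.IsSymm) :=
    hasDerivAt_dotProduct_mulVec (A := fun _ ↦ A) (A' := 0) (s := 0) hA
      (fun i j ↦ hasDerivAt_const _ _) hline
  have hlin := hasDerivAt_dotProduct (u := fun _ ↦ c.a1 r θ) (u' := 0)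
    (fun j ↦ hasDerivAt_const _ _) hline
  have hp := (((((hquad (c.hM_symm θ hθ)).div_const (r ^ 2)).const_add (ρ ^ 2)).add_const
    (c.a0 r θ * ρ ^ 2)).add ((hlin.const_mul ρ).div_const r)).add
    ((hquad (.ext fun j k ↦ c.a2_symm r θ k j)).div_const (r ^ 2))
  have hd : DifferentiableAt ℝ (fun ω ↦ c.p r θ ρ ω) ω :=
    (c.differentiableAt_hamiltonian hU (z := (r, θ, ρ, ω)) ⟨hr, hθ, trivial⟩).comp ω
      (f := fun ω ↦ (r, θ, ρ, ω)) (by fun_prop)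
  rw [pdOmega, ← hd.lineDeriv_eq_fderiv]
  simp only [lineDeriv, p_eq]
  refine hp.deriv.trans ?_
  simp only [zero_smul, add_zero, Matrix.zero_mulVec, dotProduct_zero, zero_dotProduct, zero_add, e,
    single_one_dotProduct, dotProduct_single_one, Matrix.mulVec_smul, Pi.smul_apply, smul_eq_mul]
  field_simp
  ring

lemma pdR_eq :
    pdR c.p r θ ρ ω = -(2 * r⁻¹ * (r⁻¹ • ω ⬝ᵥ c.hM θ *ᵥ r⁻¹ • ω))
      + (pderivR c.a0 r θ * ρ ^ 2
        + ρ * ((fun j ↦ pderivR (fun r θ ↦ c.a1 r θ j) r θ) ⬝ᵥ r⁻¹ • ω)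
        + r⁻¹ • ω ⬝ᵥ (Matrix.of fun j k ↦ pderivR (fun r θ ↦ c.a2 r θ j k) r θ) *ᵥ r⁻¹ • ω
        - r⁻¹ * (ρ * (c.a1 r θ ⬝ᵥ r⁻¹ • ω) + 2 * (r⁻¹ • ω ⬝ᵥ c.a2 r θ *ᵥ r⁻¹ • ω))) := by
  have hr0 : r ≠ 0 := (zero_lt_one.trans hr).ne'
  have hd {f} := differentiableAt_of_contDiffOn_end hU hr hθ (f := f)
  have h0 := hasDerivAt_pderivR (hd c.a0_smooth)
  have h1 := hasDerivAt_dotProduct (v := fun _ ↦ ω) (v' := 0)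
    (fun j ↦ hasDerivAt_pderivR (f := fun r θ ↦ c.a1 r θ j) (hd (c.a1_smooth j)))
    fun j ↦ hasDerivAt_const r _
  have h2 := hasDerivAt_dotProduct_mulVec (v := fun _ ↦ ω) (v' := 0)
    (A' := .of fun j k ↦ pderivR (fun r θ ↦ c.a2 r θ j k) r θ) (.ext fun j k ↦ c.a2_symm r θ k j)
    (fun j k ↦ hasDerivAt_pderivR (f := fun r θ ↦ c.a2 r θ j k) (hd (c.a2_smooth j k)))
    fun j ↦ hasDerivAt_const r _
  have hsq : HasDerivAt (fun s : ℝ ↦ s ^ 2) (2 * r) r := by simpa using hasDerivAt_pow 2 r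
  have hfree := (hasDerivAt_const r (ω ⬝ᵥ c.hM θ *ᵥ ω)).div hsq (pow_ne_zero 2 hr0)
  have hp := (((hfree.const_add (ρ ^ 2)).add (h0.mul_const (ρ ^ 2))).add
    ((h1.const_mul ρ).div (hasDerivAt_id r) hr0)).add (h2.div hsq (pow_ne_zero 2 hr0))
  simp only [pdR, p_eq]
  refine hp.deriv.trans ?_
  simp only [zero_dotProduct, dotProduct_zero, Matrix.mulVec_smul, dotProduct_smul,
    smul_dotProduct, smul_eq_mul, id]
  field_simp
  ring

lemma pdTheta_eq (l : Fin m) :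
    pdTheta c.p l r θ ρ ω = r⁻¹ ^ 2 * (ω ⬝ᵥ c.dhM l θ *ᵥ ω)
      + (pderivTheta l c.a0 r θ * ρ ^ 2
        + r⁻¹ * (ρ * ((fun j ↦ pderivTheta l (fun r θ ↦ c.a1 r θ j) r θ) ⬝ᵥ ω)
          + ω ⬝ᵥ (Matrix.of fun j k ↦ pderivTheta l (fun r θ ↦ c.a2 r θ j k) r θ) *ᵥ
            r⁻¹ • ω)) := by
  have hd {f} := differentiableAt_of_contDiffOn_end hU hr hθ (f := f)
  have hquad {A : (Fin m → ℝ) → Matrix (Fin m) (Fin m) ℝ} {A' : Matrix (Fin m) (Fin m) ℝ}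
      (hA : ∀ j k, HasLineDerivAt ℝ (fun θ ↦ A θ j k) (A' j k) θ (Pi.single l 1))
      (hs : (A (θ + (0 : ℝ) • Pi.single l 1)).IsSymm) :=
    hasDerivAt_dotProduct_mulVec (v := fun _ ↦ ω) (v' := 0) hs hA fun j ↦ hasDerivAt_const 0 _
  have hh := hquad (A := c.hM) (A' := c.dhM l θ) (fun j k ↦ (((c.hM_smooth j k).contDiffAt
    (hU.mem_nhds hθ)).differentiableAt (by simp)).hasFDerivAt.hasLineDerivAt _)
    (by simpa using c.hM_symm θ hθ)
  have h0 := hasLineDerivAt_pderivTheta (hd c.a0_smooth) l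
  have h1 := hasDerivAt_dotProduct (v := fun _ ↦ ω) (v' := 0)
    (fun j ↦ hasLineDerivAt_pderivTheta (f := fun r θ ↦ c.a1 r θ j) (hd (c.a1_smooth j)) l)
    fun j ↦ hasDerivAt_const 0 _
  have h2 := hquad (A := c.a2 r) (A' := .of fun j k ↦ pderivTheta l (fun r θ ↦ c.a2 r θ j k) r θ)
    (fun j k ↦ hasLineDerivAt_pderivTheta
    (f := fun r θ ↦ c.a2 r θ j k) (hd (c.a2_smooth j k)) l) (.ext fun j k ↦ c.a2_symm r _ k j)
  have hp := ((((hh.div_const (r ^ 2)).const_add (ρ ^ 2)).add (HasDerivAt.mul_const h0 (ρ ^ 2))).add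
    ((h1.const_mul ρ).div_const r)).add (h2.div_const (r ^ 2))
  have hdp : DifferentiableAt ℝ (fun θ ↦ c.p r θ ρ ω) θ :=
    (c.differentiableAt_hamiltonian hU (z := (r, θ, ρ, ω)) ⟨hr, hθ, trivial⟩).comp θ
      (f := fun θ ↦ (r, θ, ρ, ω)) (by fun_prop)
  rw [pdTheta, ← hdp.lineDeriv_eq_fderiv]
  simp only [lineDeriv, p_eq]
  refine hp.deriv.trans ?_
  simp only [zero_dotProduct, dotProduct_zero, Matrix.mulVec_smul, dotProduct_smul, smul_eq_mul]
  field_simp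
  ring

end Coeffs

end PartialDerivatives

section Asymptotics

open Asymptotics
open scoped Matrix

variable {m : ℕ} {μ : ℝ} {U K : Set (Fin m → ℝ)}

/-- The momentum `(ρ, ω / r)` in the orthonormal scaling of the cone, in which the free energy
`ρ² + r⁻² h(ω, ω)` does not depend on `r`. -/
noncomputable def scaledMomentum (z : Phase m) : ℝ × (Fin m → ℝ) := (z.2.2.1, z.1⁻¹ • z.2.2.2)

lemma isBigO_rpow_phaseEnd {a b : ℝ} (hab : a ≤ b) :
    (fun z : Phase m ↦ z.1 ^ a) =O[𝓟 (phaseEnd K)] fun z ↦ z.1 ^ b :=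
  .of_bound' <| eventually_principal.2 fun z hz ↦ by
    have hr : 0 ≤ z.1 := zero_le_one.trans hz.1.le
    rw [norm_of_nonneg (rpow_nonneg hr _), norm_of_nonneg (rpow_nonneg hr _)]
    exact rpow_le_rpow_of_exponent_le hz.1.le hab

lemma isBigO_inv_mul_rpow_phaseEnd :
    (fun z : Phase m ↦ z.1⁻¹ * z.1 ^ (-μ)) =O[𝓟 (phaseEnd K)] fun z ↦ z.1 ^ (-1 - μ) :=
  .of_bound' <| eventually_principal.2 fun z hz ↦ by
    rw [sub_eq_add_neg, rpow_add (zero_lt_one.trans hz.1), rpow_neg_one]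

section Decay

variable {f : ℝ → (Fin m → ℝ) → ℝ} {ν : ℝ} (h : DecayOn f ν 1 K)
include h

lemma DecayOn.isBigO_iterate (k : ℕ) (α : List (Fin m)) :
    (fun z : Phase m ↦ pderivR^[k] (thetaDerivs α f) z.1 z.2.1) =O[𝓟 (phaseEnd K)]
      fun z ↦ z.1 ^ (-ν - k) := by
  obtain ⟨C, -, hC⟩ := h k α
  refine .of_bound C <| eventually_principal.2 fun z hz ↦ ?_
  rw [norm_of_nonneg (rpow_nonneg (zero_le_one.trans hz.1.le) _)]
  exact hC z.1 hz.1 z.2.1 hz.2.1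

lemma DecayOn.isBigO :
    (fun z : Phase m ↦ f z.1 z.2.1) =O[𝓟 (phaseEnd K)] fun z ↦ z.1 ^ (-ν) := by
  simpa [thetaDerivs] using h.isBigO_iterate 0 []

lemma DecayOn.isBigO_pderivR :
    (fun z : Phase m ↦ pderivR f z.1 z.2.1) =O[𝓟 (phaseEnd K)] fun z ↦ z.1 ^ (-ν - 1) := by
  simpa [thetaDerivs] using h.isBigO_iterate 1 []

lemma DecayOn.isBigO_pderivTheta (l : Fin m) :
    (fun z : Phase m ↦ pderivTheta l f z.1 z.2.1) =O[𝓟 (phaseEnd K)] fun z ↦ z.1 ^ (-ν) := by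
  simpa [thetaDerivs] using h.isBigO_iterate 0 [l]

end Decay

variable {L : Filter (Phase m)}

lemma isBigO_radialMomentum :
    (fun z : Phase m ↦ z.2.2.1) =O[L] fun z ↦ ‖scaledMomentum z‖ :=
  (isBigO_fst_prod' (f' := scaledMomentum)).norm_right

lemma isBigO_inv_smul_angularMomentum :
    (fun z : Phase m ↦ z.1⁻¹ • z.2.2.2) =O[L] fun z ↦ ‖scaledMomentum z‖ :=
  (isBigO_snd_prod' (f' := scaledMomentum)).norm_right

lemma isBigO_quadratic_scaledMomentum {a f : Phase m → ℝ} {b : Phase m → Fin m → ℝ}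
    {A : Phase m → Matrix (Fin m) (Fin m) ℝ} (ha : a =O[L] f) (hb : b =O[L] f)
    (hA : ∀ j k, (fun z ↦ A z j k) =O[L] f) :
    (fun z : Phase m ↦ a z * z.2.2.1 ^ 2 + z.2.2.1 * (b z ⬝ᵥ z.1⁻¹ • z.2.2.2) +
      z.1⁻¹ • z.2.2.2 ⬝ᵥ A z *ᵥ z.1⁻¹ • z.2.2.2) =O[L] fun z ↦ f z * ‖scaledMomentum z‖ ^ 2 := by
  have h0 := ha.mul (isBigO_radialMomentum.pow 2)
  have h1 := isBigO_radialMomentum.mul (isBigO_dotProduct hb isBigO_inv_smul_angularMomentum)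
  have h2 := isBigO_dotProduct isBigO_inv_smul_angularMomentum
    (isBigO_mulVec hA isBigO_inv_smul_angularMomentum)
  exact (h0.add (h1.congr_right fun z ↦ by ring)).add (h2.congr_right fun z ↦ by ring)

lemma isBigO_scaledMomentum :
    (scaledMomentum : Phase m → _) =O[𝓟 (phaseEnd K)] fun z ↦ z.2.2 :=
  .of_bound' <| eventually_principal.2 fun z hz ↦ by
    refine max_le_max le_rfl ?_
    rw [scaledMomentum, norm_smul, norm_inv, norm_of_nonneg (zero_le_one.trans hz.1.le)]
    exact mul_le_of_le_one_left (norm_nonneg _) (inv_le_one_of_one_le₀ hz.1.le)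

namespace Coeffs

variable (c : Coeffs m μ U)

/-- The free part `ρ² + r⁻² h(ω, ω)` of the energy. -/
noncomputable def freeEnergy (z : Phase m) : ℝ :=
  z.2.2.1 ^ 2 + z.1⁻¹ • z.2.2.2 ⬝ᵥ c.hM z.2.1 *ᵥ z.1⁻¹ • z.2.2.2

variable (hK : IsCompact K) (hKU : K ⊆ U)
include hK hKU

lemma isBigO_a0 :
    (fun z : Phase m ↦ c.a0 z.1 z.2.1) =O[𝓟 (phaseEnd K)] fun z ↦ z.1 ^ (-1 - μ) :=
  (c.a0_decay K hK hKU).isBigO.trans (isBigO_rpow_phaseEnd (by linarith))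

lemma isBigO_a1 :
    (fun z : Phase m ↦ c.a1 z.1 z.2.1) =O[𝓟 (phaseEnd K)] fun z ↦ z.1 ^ (-μ) :=
  isBigO_pi.2 fun j ↦ (c.a1_decay K hK hKU j).isBigO

lemma isBigO_a2 (j k : Fin m) :
    (fun z : Phase m ↦ c.a2 z.1 z.2.1 j k) =O[𝓟 (phaseEnd K)] fun z ↦ z.1 ^ (-μ) :=
  (c.a2_decay K hK hKU j k).isBigO

lemma isBigO_hM (j k : Fin m) :
    (fun z : Phase m ↦ c.hM z.2.1 j k) =O[𝓟 (phaseEnd K)] fun _ ↦ (1 : ℝ) := by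
  obtain ⟨C, hC⟩ := hK.exists_bound_of_continuousOn ((c.hM_smooth j k).continuousOn.mono hKU)
  exact .of_bound C <| eventually_principal.2 fun z hz ↦ by simpa using hC z.2.1 hz.2.1

lemma isBigO_dhM (hU : IsOpen U) (l j k : Fin m) :
    (fun z : Phase m ↦ c.dhM l z.2.1 j k) =O[𝓟 (phaseEnd K)] fun _ ↦ (1 : ℝ) := by
  have hcont : ContinuousOn (fun θ ↦ c.dhM l θ j k) U :=
    ((c.hM_smooth j k).continuousOn_fderiv_of_isOpen hU (by simp)).clm_apply continuousOn_const
  obtain ⟨C, hC⟩ := hK.exists_bound_of_continuousOn (hcont.mono hKU)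
  exact .of_bound C <| eventually_principal.2 fun z hz ↦ by simpa using hC z.2.1 hz.2.1

lemma isBigO_hamiltonian_sub_freeEnergy :
    (fun z : Phase m ↦ c.hamiltonian z - c.freeEnergy z) =O[𝓟 (phaseEnd K)]
      fun z ↦ z.1 ^ (-μ) * ‖scaledMomentum z‖ ^ 2 := by
  refine (isBigO_quadratic_scaledMomentum ((c.isBigO_a0 hK hKU).trans
    (isBigO_rpow_phaseEnd (by linarith : -1 - μ ≤ -μ))) (c.isBigO_a1 hK hKU)
    (c.isBigO_a2 hK hKU)).congr_left fun z ↦ ?_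
  simp only [hamiltonian, freeEnergy, p_eq, Matrix.mulVec_smul, dotProduct_smul, smul_dotProduct,
    smul_eq_mul]
  ring

lemma isBigO_hamField_radius :
    (fun z : Phase m ↦ (c.hamField z).1 - 2 * z.2.2.1) =O[𝓟 (phaseEnd K)]
      fun z ↦ z.1 ^ (-μ) * ‖scaledMomentum z‖ := by
  have h0 := ((c.isBigO_a0 hK hKU).trans (isBigO_rpow_phaseEnd (by linarith : -1 - μ ≤ -μ))).mul
    isBigO_radialMomentum
  have h1 := isBigO_dotProduct (c.isBigO_a1 hK hKU) isBigO_inv_smul_angularMomentum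
  refine ((h0.const_mul_left 2).add h1).congr_left fun z ↦ ?_
  simp only [hamField, pdRho_eq]
  ring

lemma isBigO_hamField_radialMomentum (hU : IsOpen U) :
    (fun z : Phase m ↦ (c.hamField z).2.2.1 -
      2 * z.1⁻¹ * (z.1⁻¹ • z.2.2.2 ⬝ᵥ c.hM z.2.1 *ᵥ z.1⁻¹ • z.2.2.2)) =O[𝓟 (phaseEnd K)]
      fun z ↦ z.1 ^ (-1 - μ) * ‖scaledMomentum z‖ ^ 2 := by
  have hpow : (fun z : Phase m ↦ z.1 ^ (-μ - 1)) =O[𝓟 (phaseEnd K)] fun z ↦ z.1 ^ (-1 - μ) :=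
    isBigO_rpow_phaseEnd (by linarith)
  have hderiv := isBigO_quadratic_scaledMomentum
    ((c.a0_decay K hK hKU).isBigO_pderivR.trans
      (isBigO_rpow_phaseEnd (by linarith : -(1 + μ) - 1 ≤ -1 - μ)))
    (isBigO_pi.2 fun j ↦ (c.a1_decay K hK hKU j).isBigO_pderivR.trans hpow)
    (A := fun z ↦ .of fun j k ↦ pderivR (fun r θ ↦ c.a2 r θ j k) z.1 z.2.1)
    fun j k ↦ (c.a2_decay K hK hKU j k).isBigO_pderivR.trans hpow
  have hinv : (fun z : Phase m ↦ z.1⁻¹) =O[𝓟 (phaseEnd K)] fun z ↦ z.1⁻¹ := isBigO_refl _ _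
  have hcoeff := isBigO_quadratic_scaledMomentum (isBigO_zero _ _)
    ((hinv.smul (c.isBigO_a1 hK hKU)).trans isBigO_inv_mul_rpow_phaseEnd)
    (A := fun z ↦ (2 : ℝ) • z.1⁻¹ • c.a2 z.1 z.2.1)
    fun j k ↦ ((hinv.smul (c.isBigO_a2 hK hKU j k)).const_smul_left (2 : ℝ)).trans
      isBigO_inv_mul_rpow_phaseEnd
  refine (hcoeff.sub hderiv).congr' (eventuallyEq_principal.2 fun z hz ↦ ?_) .rfl
  simp only [hamField, pdR_eq hU hz.1 (hKU hz.2.1), Matrix.smul_mulVec, smul_dotProduct,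
    dotProduct_smul, smul_eq_mul]
  ring

lemma isBigO_hamField_angle (hU : IsOpen U) :
    (fun z : Phase m ↦ (c.hamField z).2.1 - z.1⁻¹ ^ 2 • (2 : ℝ) • c.hM z.2.1 *ᵥ z.2.2.2)
      =O[𝓟 (phaseEnd K)] fun z ↦ z.1 ^ (-1 - μ) * ‖scaledMomentum z‖ := by
  have hinv : (fun z : Phase m ↦ z.1⁻¹) =O[𝓟 (phaseEnd K)] fun z ↦ z.1⁻¹ := isBigO_refl _ _
  have h1 := (isBigO_radialMomentum.smul (c.isBigO_a1 hK hKU)).congr_right fun z ↦ mul_comm _ _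
  have h2 := isBigO_mulVec (c.isBigO_a2 hK hKU) isBigO_inv_smul_angularMomentum
  have h := (hinv.smul (h1.add (h2.const_smul_left (2 : ℝ)))).trans
    ((isBigO_inv_mul_rpow_phaseEnd.mul (isBigO_refl _ _)).congr_left fun z ↦ mul_assoc _ _ _)
  refine h.congr' (eventuallyEq_principal.2 fun z hz ↦ funext fun l ↦ ?_) .rfl
  simp only [hamField, Pi.sub_apply, Pi.smul_apply, Pi.add_apply, smul_eq_mul,
    pdOmega_eq hU hz.1 (hKU hz.2.1)]
  ring

lemma isBigO_hamField_angularMomentum (hU : IsOpen U) :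
    (fun z : Phase m ↦ (c.hamField z).2.2.2 +
      z.1⁻¹ ^ 2 • fun l ↦ z.2.2.2 ⬝ᵥ c.dhM l z.2.1 *ᵥ z.2.2.2) =O[𝓟 (phaseEnd K)]
      fun z ↦ z.1 ^ (-1 - μ) * (‖scaledMomentum z‖ * ‖z.2.2‖) := by
  have hρ : (fun z : Phase m ↦ z.2.2.1) =O[𝓟 (phaseEnd K)] fun z ↦ ‖z.2.2‖ :=
    isBigO_fst_prod'.norm_right
  have hω : (fun z : Phase m ↦ z.2.2.2) =O[𝓟 (phaseEnd K)] fun z ↦ ‖z.2.2‖ :=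
    isBigO_snd_prod'.norm_right
  have hinv : (fun z : Phase m ↦ z.1⁻¹) =O[𝓟 (phaseEnd K)] fun z ↦ z.1⁻¹ := isBigO_refl _ _
  refine isBigO_pi.2 fun l ↦ ?_
  have h0 := ((c.a0_decay K hK hKU).isBigO_pderivTheta l |>.trans
    (isBigO_rpow_phaseEnd (by linarith : -(1 + μ) ≤ -1 - μ))).mul (isBigO_radialMomentum.mul hρ)
  have h1 := isBigO_radialMomentum.mul (isBigO_dotProduct (isBigO_pi.2 fun j ↦
    (c.a1_decay K hK hKU j).isBigO_pderivTheta l) hω)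
  have h2 := isBigO_dotProduct hω (isBigO_mulVec
    (A := fun z : Phase m ↦ .of fun j k ↦ pderivTheta l (fun r θ ↦ c.a2 r θ j k) z.1 z.2.1)
    (fun j k ↦ (c.a2_decay K hK hKU j k).isBigO_pderivTheta l) isBigO_inv_smul_angularMomentum)
  have h12 := hinv.mul (h1.add (h2.congr_right fun z ↦ by ring))
  have h := h0.add (h12.trans ((isBigO_inv_mul_rpow_phaseEnd.mul
    (isBigO_refl (fun z ↦ ‖scaledMomentum z‖ * ‖z.2.2‖) _)).congr_left fun z ↦ by ring))
  refine h.neg_left.congr' (eventuallyEq_principal.2 fun z hz ↦ ?_) .rfl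
  simp only [hamField, Pi.add_apply, Pi.smul_apply, smul_eq_mul, pdTheta_eq hU hz.1 (hKU hz.2.1)]
  ring

end Coeffs

end Asymptotics

section HamiltonianEstimates

open Asymptotics
open scoped Matrix

lemma prod_norm_sq_le_add {E F : Type*} [NormedAddCommGroup E] [NormedAddCommGroup F]
    (x : E × F) : ‖x‖ ^ 2 ≤ ‖x.1‖ ^ 2 + ‖x.2‖ ^ 2 := by
  rw [Prod.norm_def]
  rcases max_choice ‖x.1‖ ‖x.2‖ with h | h <;> rw [h] <;> simp

lemma exists_forall_mul_norm_sq_le_dotProduct_mulVec {X ι : Type*} [TopologicalSpace X] [Fintype ι]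
    {K : Set X} (hK : IsCompact K) {A : X → Matrix ι ι ℝ}
    (hA : ∀ i j, ContinuousOn (fun x ↦ A x i j) K) (hpos : ∀ x ∈ K, (A x).PosDef) :
    ∃ k > 0, ∀ x ∈ K, ∀ v, k * ‖v‖ ^ 2 ≤ v ⬝ᵥ A x *ᵥ v := by
  have hcont : ContinuousOn (fun z : X × (ι → ℝ) ↦ z.2 ⬝ᵥ A z.1 *ᵥ z.2)
      (K ×ˢ Metric.sphere 0 1) := by
    refine continuousOn_finsetSum _ fun i _ ↦ .mul (by fun_prop) ?_
    refine continuousOn_finsetSum _ fun j _ ↦ .mul ?_ (by fun_prop)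
    exact (hA i j).comp continuousOn_fst fun z hz ↦ hz.1
  obtain ⟨k, hk, hmin⟩ := (hK.prod (isCompact_sphere _ _)).exists_forall_le' hcont (a := 0)
    fun z hz ↦ (hpos z.1 hz.1).dotProduct_mulVec_pos (ne_zero_of_mem_unit_sphere ⟨z.2, hz.2⟩)
  refine ⟨k, hk, fun x hx v ↦ ?_⟩
  rcases eq_or_ne v 0 with rfl | hv
  · simp
  have hunit := hmin (x, ‖v‖⁻¹ • v) ⟨hx, by simp [norm_smul, hv]⟩
  have hv0 : 0 < ‖v‖ := norm_pos_iff.2 hv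
  rw [Matrix.mulVec_smul, dotProduct_smul, smul_dotProduct, smul_eq_mul, smul_eq_mul] at hunit
  calc k * ‖v‖ ^ 2 ≤ ‖v‖⁻¹ * (‖v‖⁻¹ * (v ⬝ᵥ A x *ᵥ v)) * ‖v‖ ^ 2 := by gcongr
    _ = v ⬝ᵥ A x *ᵥ v := by field_simp

variable {m : ℕ} {μ : ℝ} {U K : Set (Fin m → ℝ)}

namespace Coeffs

variable (c : Coeffs m μ U)

section

variable (hK : IsCompact K) (hKU : K ⊆ U)
include hK hKU

lemma exists_forall_mul_norm_sq_le_hM :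
    ∃ k > 0, ∀ θ ∈ K, ∀ ω, k * ‖ω‖ ^ 2 ≤ ω ⬝ᵥ c.hM θ *ᵥ ω :=
  exists_forall_mul_norm_sq_le_dotProduct_mulVec hK
    (fun j k ↦ (c.hM_smooth j k).continuousOn.mono hKU) fun θ hθ ↦ c.hM_posdef θ (hKU hθ)

lemma isBigO_scaledMomentum_sq_freeEnergy :
    (fun z : Phase m ↦ ‖scaledMomentum z‖ ^ 2) =O[𝓟 (phaseEnd K)] c.freeEnergy := by
  obtain ⟨k, hk, hcoer⟩ := c.exists_forall_mul_norm_sq_le_hM hK hKU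
  refine .of_bound (1 + k⁻¹) <| eventually_principal.2 fun z hz ↦ ?_
  set ξ := z.1⁻¹ • z.2.2.2 with hξ
  have hξk : ‖ξ‖ ^ 2 ≤ k⁻¹ * (ξ ⬝ᵥ c.hM z.2.1 *ᵥ ξ) := by
    rw [inv_mul_eq_div, le_div_iff₀' hk]
    exact hcoer z.2.1 hz.2.1 ξ
  have hξ0 : 0 ≤ ξ ⬝ᵥ c.hM z.2.1 *ᵥ ξ :=
    (by positivity : 0 ≤ k * ‖ξ‖ ^ 2).trans (hcoer z.2.1 hz.2.1 ξ)
  rw [norm_of_nonneg (by positivity), freeEnergy, ← hξ, norm_of_nonneg (by positivity)]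
  calc ‖scaledMomentum z‖ ^ 2 ≤ z.2.2.1 ^ 2 + ‖ξ‖ ^ 2 := by
        simpa [scaledMomentum, hξ] using prod_norm_sq_le_add (scaledMomentum z)
    _ ≤ z.2.2.1 ^ 2 + k⁻¹ * (ξ ⬝ᵥ c.hM z.2.1 *ᵥ ξ) := by gcongr
    _ ≤ (1 + k⁻¹) * (z.2.2.1 ^ 2 + ξ ⬝ᵥ c.hM z.2.1 *ᵥ ξ) := by
      nlinarith [mul_nonneg (inv_pos.2 hk).le (sq_nonneg z.2.2.1)]

/-- The virial identity: the first two terms are the derivative of `r ρ` along the flow. -/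
lemma isBigO_hamField_virial (hU : IsOpen U) :
    (fun z : Phase m ↦ (c.hamField z).1 * z.2.2.1 + z.1 * (c.hamField z).2.2.1 -
      2 * c.hamiltonian z) =O[𝓟 (phaseEnd K)] fun z ↦ z.1 ^ (-μ) * ‖scaledMomentum z‖ ^ 2 := by
  have hr : (fun z : Phase m ↦ z.1 * (z.1 ^ (-1 - μ) * ‖scaledMomentum z‖ ^ 2))
      =O[𝓟 (phaseEnd K)] fun z ↦ z.1 ^ (-μ) * ‖scaledMomentum z‖ ^ 2 :=
    .of_bound' <| eventually_principal.2 fun z hz ↦ by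
      rw [← mul_assoc, sub_eq_add_neg, rpow_add (zero_lt_one.trans hz.1), rpow_neg_one,
        mul_inv_cancel_left₀ (zero_lt_one.trans hz.1).ne']
  have h1 := ((c.isBigO_hamField_radius hK hKU).mul isBigO_radialMomentum).congr_right
    (g₂ := fun z ↦ z.1 ^ (-μ) * ‖scaledMomentum z‖ ^ 2) fun z ↦ by ring
  have h2 := ((isBigO_refl (fun z : Phase m ↦ z.1) _).mul
    (c.isBigO_hamField_radialMomentum hK hKU hU)).trans hr
  have h3 := (c.isBigO_hamiltonian_sub_freeEnergy hK hKU).const_mul_left 2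
  refine ((h1.add h2).sub h3).congr' (eventuallyEq_principal.2 fun z hz ↦ ?_) .rfl
  simp only [freeEnergy]
  linear_combination (-2 * (z.1⁻¹ • z.2.2.2 ⬝ᵥ c.hM z.2.1 *ᵥ z.1⁻¹ • z.2.2.2)) *
    mul_inv_cancel₀ (zero_lt_one.trans (mem_Ioi.1 hz.1)).ne'

variable {L : Filter (Phase m)} (hL : L ≤ 𝓟 (phaseEnd K))
  (hp : (fun z : Phase m ↦ z.2.2) =O[L] fun _ ↦ (1 : ℝ))
include hL hp

lemma isBigO_hamField_snd (hU : IsOpen U) (hμ : μ ≤ 1) :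
    (fun z : Phase m ↦ (c.hamField z).2) =O[L] fun z ↦ z.1 ^ (-1 - μ) := by
  have hinv : (fun z : Phase m ↦ z.1⁻¹ ^ 2) =O[L] fun z ↦ z.1 ^ (-1 - μ) := by
    refine ((isBigO_rpow_phaseEnd (by linarith : (-2 : ℝ) ≤ -1 - μ)).mono hL).congr'
      ((eventuallyEq_principal.2 fun z hz ↦ ?_).filter_mono hL) .rfl
    simp [rpow_neg (zero_le_one.trans hz.1.le)]
  have hω : (fun z : Phase m ↦ z.2.2.2) =O[L] fun _ ↦ (1 : ℝ) := isBigO_snd_prod'.trans hp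
  have hζ : (fun z : Phase m ↦ ‖scaledMomentum z‖) =O[L] fun _ ↦ (1 : ℝ) :=
    ((isBigO_scaledMomentum.mono hL).trans hp).norm_left
  have hξ : (fun z : Phase m ↦ z.1⁻¹ • z.2.2.2) =O[L] fun _ ↦ (1 : ℝ) :=
    isBigO_inv_smul_angularMomentum.trans hζ
  have absorb {f : Phase m → ℝ} (hf : f =O[L] fun _ ↦ (1 : ℝ)) :
      (fun z ↦ z.1 ^ (-1 - μ) * f z) =O[L] fun z ↦ z.1 ^ (-1 - μ) := by
    simpa only [mul_one] using (isBigO_refl (fun z : Phase m ↦ z.1 ^ (-1 - μ)) L).mul hf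
  have hangle := (((c.isBigO_hamField_angle hK hKU hU).mono hL).trans (absorb hζ)).add
    ((hinv.smul ((isBigO_mulVec (fun j k ↦ (c.isBigO_hM hK hKU j k).mono hL) hω).const_smul_left
      (2 : ℝ))).congr_right fun z ↦ by simp)
  have hρ := (((c.isBigO_hamField_radialMomentum hK hKU hU).mono hL).trans
    (absorb (by simpa using hζ.pow 2))).add ((hinv.mul ((isBigO_dotProduct hω (isBigO_mulVec
      (fun j k ↦ (c.isBigO_hM hK hKU j k).mono hL) hξ)).const_mul_left 2)).congr_right
      fun z ↦ by simp)
  have hangular := (((c.isBigO_hamField_angularMomentum hK hKU hU).mono hL).trans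
    (absorb (by simpa using hζ.mul hp.norm_left))).sub ((hinv.smul (isBigO_pi.2 fun l ↦
      isBigO_dotProduct hω (isBigO_mulVec
        (fun j k ↦ (c.isBigO_dhM hK hKU hU l j k).mono hL) hω))).congr_right fun z ↦ by simp)
  refine .prod_left (hangle.congr_left fun z ↦ sub_add_cancel _ _) (.prod_left
    (hρ.congr_left fun z ↦ ?_) (hangular.congr_left fun z ↦ add_sub_cancel_right _ _))
  change _ = (c.hamField z).2.2.1
  rw [smul_dotProduct, smul_eq_mul]
  ring

end

lemma isAsymptoticallyRadial_neg_hamField (hU : IsOpen U) (hμ : μ ≤ 1) :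
    IsAsymptoticallyRadial (fun z ↦ -c.hamField z) (fun y ↦ -2 * y.2.1) (U ×ˢ univ) μ := by
  have hcompact {Q : Set ((Fin m → ℝ) × ℝ × (Fin m → ℝ))} (hQU : Q ⊆ U ×ˢ univ)
      (hQ : IsCompact Q) : ∃ K ⊆ U, IsCompact K ∧ 𝓟 (Ioi 1 ×ˢ Q) ≤ 𝓟 (phaseEnd K) ∧
        (fun z : Phase m ↦ z.2.2) =O[𝓟 (Ioi 1 ×ˢ Q)] fun _ ↦ (1 : ℝ) := by
    obtain ⟨C, hC⟩ := hQ.exists_bound_of_continuousOn (f := Prod.snd) continuousOn_snd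
    refine ⟨Prod.fst '' Q, image_subset_iff.2 fun y hy ↦ (hQU hy).1, hQ.image continuous_fst,
      principal_mono.2 fun z hz ↦ ⟨hz.1, mem_image_of_mem _ hz.2, trivial⟩,
      .of_bound C <| eventually_principal.2 fun z hz ↦ by simpa using hC z.2 hz.2⟩
  refine ⟨(c.contDiffOn_hamField hU).neg, by fun_prop, fun Q hQU hQ ↦ ?_, fun Q hQU hQ ↦ ?_⟩ <;>
    obtain ⟨K, hKU, hK, hL, hp⟩ := hcompact hQU hQ
  · have hζ := (isBigO_refl (fun z : Phase m ↦ z.1 ^ (-μ)) _).mul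
      ((isBigO_scaledMomentum.mono hL).trans hp).norm_left
    refine (((c.isBigO_hamField_radius hK hKU).mono hL).trans hζ).neg_left.congr
      (fun z ↦ ?_) fun z ↦ mul_one _
    rw [Prod.fst_neg]
    ring
  · exact (c.isBigO_hamField_snd hK hKU hL hp hU hμ).neg_left

end Coeffs

end HamiltonianEstimates

section GrowthOfFunctions

open Asymptotics

variable {f f' r r' : ℝ → ℝ} {a c μ : ℝ}

lemma tendsto_atTop_of_hasDerivAt_of_le (hc : 0 < c)
    (hf : ∀ᶠ s in atTop, HasDerivAt f (f' s) s) (hf' : ∀ᶠ s in atTop, c ≤ f' s) :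
    Tendsto f atTop atTop := by
  obtain ⟨a, ha⟩ := eventually_atTop.1 (hf.and hf')
  have hlin : Tendsto (fun s ↦ f a + c * (s - a)) atTop atTop :=
    tendsto_atTop_add_const_left _ _
      ((tendsto_atTop_add_const_right _ (-a) tendsto_id).const_mul_atTop hc)
  refine tendsto_atTop_mono' _ ((eventually_ge_atTop a).mono fun s hs ↦ ?_) hlin
  linarith [mul_sub_le_sub_of_le_hasDerivAt hs (fun t ht ↦ (ha t ht.1).1) fun t ht ↦ (ha t ht.1).2]

lemma exists_pos_eventually_mul_le_of_hasDerivAt (hc : 0 < c)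
    (hf : ∀ᶠ s in atTop, HasDerivAt f (f' s) s) (hf' : ∀ᶠ s in atTop, c ≤ f' s)
    (hr : ∀ᶠ s in atTop, HasDerivAt r (r' s) s) (hr' : r' =O[atTop] fun _ ↦ (1 : ℝ)) :
    ∃ ε > 0, ∀ᶠ s in atTop, ε * r s ≤ f s := by
  obtain ⟨B, hB, hr'⟩ := hr'.exists_pos
  refine ⟨c / (2 * B), by positivity, ?_⟩
  have hderiv : ∀ᶠ s in atTop, HasDerivAt (fun s ↦ f s - c / (2 * B) * r s)
      (f' s - c / (2 * B) * r' s) s := by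
    filter_upwards [hf, hr] with s hf hr using hf.sub (hr.const_mul _)
  refine ((tendsto_atTop_of_hasDerivAt_of_le (half_pos hc) hderiv ?_).eventually_ge_atTop 0).mono
    fun s hs ↦ sub_nonneg.1 hs
  filter_upwards [hf', hr'.bound] with s hf' hr'
  have hle : c / (2 * B) * r' s ≤ c / (2 * B) * B := by
    gcongr
    simpa using (le_abs_self _).trans hr'
  have hhalf : c / (2 * B) * B = c / 2 := by field_simp
  linarith

/-- The logarithm `log (1 + f)` has an integrable derivative. -/
lemma isBigO_one_of_hasDerivAt_isBigO_rpow_mul (hμ : 0 < μ) (hc : 0 < c)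
    (hr : ∀ᶠ s in atTop, HasDerivAt r (r' s) s) (hr0 : ∀ᶠ s in atTop, 0 < r s)
    (hr' : ∀ᶠ s in atTop, c ≤ r' s) (hf : ∀ᶠ s in atTop, HasDerivAt f (f' s) s)
    (hf0 : ∀ᶠ s in atTop, 0 ≤ f s) (hf' : f' =O[atTop] fun s ↦ r s ^ (-1 - μ) * (1 + f s)) :
    f =O[atTop] fun _ ↦ (1 : ℝ) := by
  obtain ⟨C, hC, hf'⟩ := hf'.exists_pos
  obtain ⟨a, ha⟩ := eventually_atTop.1
    (hr.and <| hr0.and <| hr'.and <| hf.and <| hf0.and hf'.bound)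
  have hlog : ∀ s ≥ a, HasDerivAt (fun s ↦ log (1 + f s)) (f' s / (1 + f s)) s := fun s hs ↦ by
    obtain ⟨-, -, -, hf, hf0, -⟩ := ha s hs
    exact (hf.const_add 1).log (by positivity)
  have hlog' : ∀ s ≥ a, ‖f' s / (1 + f s)‖ ≤ C * r s ^ (-1 - μ) := fun s hs ↦ by
    obtain ⟨-, hr0, -, -, hf0, hf'⟩ := ha s hs
    rw [norm_div, norm_of_nonneg (by positivity : 0 ≤ 1 + f s), div_le_iff₀ (by positivity),
      mul_assoc]
    rwa [norm_of_nonneg (by positivity : 0 ≤ r s ^ (-1 - μ) * (1 + f s))] at hf'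
  refine .of_bound (exp (log (1 + f a) + C / (μ * c) * r a ^ (-μ))) <|
    (eventually_ge_atTop a).mono fun s hs ↦ ?_
  have hle := norm_sub_le_of_norm_deriv_le_rpow hμ hc hC.le hs (fun t ht ↦ (ha t ht.1).1)
    (fun t ht ↦ hlog t ht.1) (fun t ht ↦ (ha t ht.1).2.1) (fun t ht ↦ (ha t ht.1).2.2.1)
    fun t ht ↦ hlog' t ht.1
  have hfs : 0 ≤ f s := (ha s hs).2.2.2.2.1
  have hexp : 1 + f s ≤ exp (log (1 + f a) + C / (μ * c) * r a ^ (-μ)) := by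
    rw [← log_le_iff_le_exp (by positivity)]
    linarith [le_abs_self (log (1 + f s) - log (1 + f a)), Real.norm_eq_abs _ ▸ hle]
  rw [norm_one, mul_one, norm_of_nonneg hfs]
  linarith

lemma exists_forall_norm_le_of_isBigO_one {E : Type*} [NormedAddCommGroup E] {f : ℝ → E}
    (hf : ContinuousOn f (Ici a)) (hf1 : f =O[atTop] fun _ ↦ (1 : ℝ)) :
    ∃ M, ∀ s ≥ a, ‖f s‖ ≤ M := by
  obtain ⟨M, hM⟩ := hf1.bound
  obtain ⟨b, hb⟩ := eventually_atTop.1 hM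
  obtain ⟨N, hN⟩ := isCompact_Icc.exists_bound_of_continuousOn
    (hf.mono (Icc_subset_Ici_self : Icc a b ⊆ Ici a))
  refine ⟨max M N, fun s hs ↦ ?_⟩
  rcases le_total s b with hsb | hbs
  · exact (hN s ⟨hs, hsb⟩).trans (le_max_right _ _)
  · exact (by simpa using hb s hbs : ‖f s‖ ≤ M).trans (le_max_left _ _)

end GrowthOfFunctions

section AngularEnergy

open Asymptotics
open scoped Matrix

variable {m : ℕ} {μ : ℝ} {U K : Set (Fin m → ℝ)}

namespace Coeffs

variable (c : Coeffs m μ U)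

/-- The angular energy `h(ω, ω)`, a first integral of the free motion. -/
noncomputable def angularEnergy (z : Phase m) : ℝ := z.2.2.2 ⬝ᵥ c.hM z.2.1 *ᵥ z.2.2.2

lemma angularEnergy_nonneg {z : Phase m} (hz : z.2.1 ∈ U) : 0 ≤ c.angularEnergy z :=
  (c.hM_posdef _ hz).posSemidef.dotProduct_mulVec_nonneg _

/-- The derivative of the angular energy at `z` in the direction `v`. -/
noncomputable def angularEnergyDeriv (z v : Phase m) : ℝ :=
  v.2.1 ⬝ᵥ (fun l ↦ z.2.2.2 ⬝ᵥ c.dhM l z.2.1 *ᵥ z.2.2.2) + 2 * (v.2.2.2 ⬝ᵥ c.hM z.2.1 *ᵥ z.2.2.2)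

lemma hasDerivAt_angularEnergy (hU : IsOpen U) {γ : ℝ → Phase m} {v : Phase m} {s : ℝ}
    (hγ : HasDerivAt γ v s) (hs : (γ s).2.1 ∈ U) :
    HasDerivAt (fun s ↦ c.angularEnergy (γ s)) (c.angularEnergyDeriv (γ s) v) s := by
  have hh (j k) : HasDerivAt (fun s ↦ c.hM (γ s).2.1 j k)
      ((∑ l, v.2.1 l • c.dhM l (γ s).2.1) j k) s := by
    have hd := (((c.hM_smooth j k).contDiffAt (hU.mem_nhds hs)).differentiableAt
      (by simp)).hasFDerivAt.comp_hasDerivAt s hγ.snd.fst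
    refine hd.congr_deriv ?_
    conv_lhs => rw [pi_eq_sum_univ' v.2.1, map_sum]
    simp [Matrix.sum_apply, dhM]
  refine (hasDerivAt_dotProduct_mulVec (c.hM_symm _ hs) hh
    (hasDerivAt_pi.1 hγ.snd.snd.snd)).congr_deriv ?_
  rw [angularEnergyDeriv, Matrix.sum_mulVec, dotProduct_sum]
  simp only [Matrix.smul_mulVec, dotProduct_smul, smul_eq_mul]
  rfl

variable (hK : IsCompact K) (hKU : K ⊆ U)
include hK hKU

/-- The contributions of the free motion to the two terms cancel. -/
lemma isBigO_angularEnergyDeriv_hamField (hU : IsOpen U) :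
    (fun z ↦ c.angularEnergyDeriv z (c.hamField z)) =O[𝓟 (phaseEnd K)]
      fun z ↦ z.1 ^ (-1 - μ) * (‖scaledMomentum z‖ * ‖z.2.2‖ ^ 2) := by
  have hω : (fun z : Phase m ↦ z.2.2.2) =O[𝓟 (phaseEnd K)] fun z ↦ ‖z.2.2‖ :=
    isBigO_snd_prod'.norm_right
  have hθ := isBigO_dotProduct (c.isBigO_hamField_angle hK hKU hU) <| isBigO_pi.2 fun l ↦
    isBigO_dotProduct hω (isBigO_mulVec (c.isBigO_dhM hK hKU hU l) hω)
  have hω' := isBigO_dotProduct (c.isBigO_hamField_angularMomentum hK hKU hU)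
    (isBigO_mulVec (c.isBigO_hM hK hKU) hω)
  refine ((hθ.congr_right fun z ↦ by ring).add
    ((hω'.const_mul_left 2).congr_right fun z ↦ by ring)).congr_left fun z ↦ ?_
  simp only [angularEnergyDeriv, sub_dotProduct, add_dotProduct, smul_dotProduct, smul_eq_mul]
  rw [dotProduct_comm (c.hM z.2.1 *ᵥ z.2.2.2)]
  ring

lemma isBigO_angularMomentum_sq_angularEnergy :
    (fun z : Phase m ↦ ‖z.2.2.2‖ ^ 2) =O[𝓟 (phaseEnd K)] c.angularEnergy := by
  obtain ⟨k, hk, hcoer⟩ := c.exists_forall_mul_norm_sq_le_hM hK hKU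
  refine .of_bound k⁻¹ <| eventually_principal.2 fun z hz ↦ ?_
  rw [norm_of_nonneg (by positivity), inv_mul_eq_div, le_div_iff₀' hk]
  exact (hcoer z.2.1 hz.2.1 z.2.2.2).trans (le_abs_self _)

end Coeffs

end AngularEnergy

section EscapingTrajectories

open Asymptotics

variable {m : ℕ} {μ p₀ : ℝ} {U K : Set (Fin m → ℝ)} {γ : ℝ → Phase m}

namespace Coeffs

variable (c : Coeffs m μ U) (hK : IsCompact K) (hKU : K ⊆ U) (hμ : 0 < μ)
  (hγK : ∀ᶠ s in atTop, γ s ∈ phaseEnd K) (hesc : Tendsto (fun s ↦ (γ s).1) atTop atTop)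
  (hE : ∀ᶠ s in atTop, c.hamiltonian (γ s) = p₀)
include hK hKU hμ hγK hesc hE

lemma isBigO_scaledMomentum_comp :
    (fun s ↦ ‖scaledMomentum (γ s)‖) =O[atTop] fun _ ↦ (1 : ℝ) := by
  have hγ' := tendsto_principal.2 hγK
  have hpow : (fun s ↦ (γ s).1 ^ (-μ)) =o[atTop] fun _ ↦ (1 : ℝ) :=
    (isLittleO_one_iff ℝ).2 ((tendsto_rpow_neg_atTop hμ).comp hesc)
  have hζ := (c.isBigO_scaledMomentum_sq_freeEnergy hK hKU).comp_tendsto hγ'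
  have hdiff : (fun s ↦ c.hamiltonian (γ s) - c.freeEnergy (γ s)) =o[atTop]
      fun s ↦ c.freeEnergy (γ s) :=
    ((c.isBigO_hamiltonian_sub_freeEnergy hK hKU).comp_tendsto hγ').trans_isLittleO
      ((hpow.mul_isBigO hζ).congr_right fun s ↦ one_mul _)
  have hfree : (fun s ↦ c.freeEnergy (γ s)) =O[atTop] fun _ ↦ (1 : ℝ) := by
    refine hdiff.right_isBigO_add.trans (.congr' (isBigO_const_const p₀ one_ne_zero _) ?_ .rfl)
    filter_upwards [hE] with s hs using by simp [hs]
  exact .of_pow two_ne_zero ((hζ.trans hfree).congr_right fun _ ↦ (one_pow 2).symm)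

lemma isBigO_radialMomentum_comp : (fun s ↦ (γ s).2.2.1) =O[atTop] fun _ ↦ (1 : ℝ) :=
  (isBigO_radialMomentum.comp_tendsto tendsto_top).trans
    (c.isBigO_scaledMomentum_comp hK hKU hμ hγK hesc hE)

lemma isBigO_momentum_sq_comp :
    (fun s ↦ ‖(γ s).2.2‖ ^ 2) =O[atTop] fun s ↦ 1 + c.angularEnergy (γ s) := by
  have hq0 : ∀ᶠ s in atTop, 0 ≤ c.angularEnergy (γ s) :=
    hγK.mono fun s hs ↦ c.angularEnergy_nonneg (hKU hs.2.1)
  have hone : (fun _ ↦ (1 : ℝ)) =O[atTop] fun s ↦ 1 + c.angularEnergy (γ s) :=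
    .of_norm_eventuallyLE <| by filter_upwards [hq0] with s hs using by simpa
  have hq : (fun s ↦ c.angularEnergy (γ s)) =O[atTop] fun s ↦ 1 + c.angularEnergy (γ s) :=
    .of_norm_eventuallyLE <| by
      filter_upwards [hq0] with s hs
      rw [norm_of_nonneg hs]
      linarith
  have hρ := ((c.isBigO_radialMomentum_comp hK hKU hμ hγK hesc hE).norm_left.pow 2).trans
    (by simpa only [one_pow] using hone)
  have hω := ((c.isBigO_angularMomentum_sq_angularEnergy hK hKU).comp_tendsto
    (tendsto_principal.2 hγK)).trans hq
  exact (isBigO_of_le _ fun s ↦ (norm_of_nonneg (by positivity)).trans_le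
    ((prod_norm_sq_le_add _).trans (le_abs_self _))).trans (hρ.add hω)

lemma isLittleO_rpow_mul_scaledMomentum_pow (n : ℕ) :
    (fun s ↦ (γ s).1 ^ (-μ) * ‖scaledMomentum (γ s)‖ ^ n) =o[atTop] fun _ ↦ (1 : ℝ) := by
  have hζ := c.isBigO_scaledMomentum_comp hK hKU hμ hγK hesc hE
  have hpow : (fun s ↦ (γ s).1 ^ (-μ)) =o[atTop] fun _ ↦ (1 : ℝ) :=
    (isLittleO_one_iff ℝ).2 ((tendsto_rpow_neg_atTop hμ).comp hesc)
  simpa only [one_pow, mul_one] using hpow.mul_isBigO (hζ.pow n)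

lemma tendsto_hamField_radius_sub :
    Tendsto (fun s ↦ (c.hamField (γ s)).1 - 2 * (γ s).2.2.1) atTop (𝓝 0) := by
  refine (isLittleO_one_iff ℝ).1 <| ((c.isBigO_hamField_radius hK hKU).comp_tendsto
    (tendsto_principal.2 hγK)).trans_isLittleO ?_
  simpa only [Function.comp_def, pow_one] using
    c.isLittleO_rpow_mul_scaledMomentum_pow hK hKU hμ hγK hesc hE 1

lemma tendsto_hamField_virial (hU : IsOpen U) :
    Tendsto (fun s ↦ (c.hamField (γ s)).1 * (γ s).2.2.1 + (γ s).1 * (c.hamField (γ s)).2.2.1)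
      atTop (𝓝 (2 * p₀)) := by
  have hlim := (isLittleO_one_iff ℝ).1 <| ((c.isBigO_hamField_virial hK hKU hU).comp_tendsto
    (tendsto_principal.2 hγK)).trans_isLittleO
    (c.isLittleO_rpow_mul_scaledMomentum_pow hK hKU hμ hγK hesc hE 2)
  refine (zero_add (2 * p₀) ▸ hlim.add_const (2 * p₀)).congr' ?_
  filter_upwards [hE] with s hs
  simp [hs]

lemma isBigO_angularEnergyDeriv_comp (hU : IsOpen U) :
    (fun s ↦ c.angularEnergyDeriv (γ s) (-c.hamField (γ s))) =O[atTop]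
      fun s ↦ (γ s).1 ^ (-1 - μ) * (1 + c.angularEnergy (γ s)) := by
  have hζ := c.isBigO_scaledMomentum_comp hK hKU hμ hγK hesc hE
  have hflow := ((c.isBigO_angularEnergyDeriv_hamField hK hKU hU).comp_tendsto
    (tendsto_principal.2 hγK)).trans
    ((isBigO_refl _ _).mul (hζ.mul (c.isBigO_momentum_sq_comp hK hKU hμ hγK hesc hE)))
  refine hflow.neg_left.congr (fun s ↦ ?_) fun s ↦ by rw [one_mul]
  simp only [angularEnergyDeriv, Prod.fst_neg, Prod.snd_neg, neg_dotProduct, Function.comp_def]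
  ring

variable (hU : IsOpen U) (hp₀ : 0 < p₀)
  (hγ : ∀ᶠ s in atTop, HasDerivAt γ (-c.hamField (γ s)) s)
include hU hp₀ hγ

/-- In reversed time `-r ρ` grows at the rate `2 p₀`, whereas `r` grows at most linearly. -/
lemma exists_pos_eventually_radialMomentum_le :
    ∃ ε > 0, ∀ᶠ s in atTop, (γ s).2.2.1 ≤ -ε := by
  have hρ := c.isBigO_radialMomentum_comp hK hKU hμ hγK hesc hE
  have hspeed : (fun s ↦ (-c.hamField (γ s)).1) =O[atTop] fun _ ↦ (1 : ℝ) :=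
    (((c.tendsto_hamField_radius_sub hK hKU hμ hγK hesc hE).isBigO_one ℝ).add
      (hρ.const_mul_left 2)).neg_left.congr_left fun s ↦ by simp
  have hvirial : ∀ᶠ s in atTop, HasDerivAt (fun s ↦ -((γ s).1 * (γ s).2.2.1))
      ((c.hamField (γ s)).1 * (γ s).2.2.1 + (γ s).1 * (c.hamField (γ s)).2.2.1) s := by
    filter_upwards [hγ] with s hs
    have hr : HasDerivAt (fun s ↦ (γ s).1) _ s := hs.fst
    have hρ : HasDerivAt (fun s ↦ (γ s).2.2.1) _ s := hs.snd.snd.fst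
    refine (hr.mul hρ).neg.congr_deriv ?_
    simp only [Prod.fst_neg, Prod.snd_neg]
    ring
  obtain ⟨ε, hε, hle⟩ := exists_pos_eventually_mul_le_of_hasDerivAt hp₀ hvirial
    ((c.tendsto_hamField_virial hK hKU hμ hγK hesc hE hU).eventually_const_le (by linarith))
    (hγ.mono fun s hs ↦ hs.fst) hspeed
  refine ⟨ε, hε, ?_⟩
  filter_upwards [hle, hesc.eventually_gt_atTop 0] with s hs hr
  exact le_of_mul_le_mul_left (by linarith) hr

lemma isBigO_momentum_comp : (fun s ↦ (γ s).2.2) =O[atTop] fun _ ↦ (1 : ℝ) := by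
  have hρ := c.isBigO_radialMomentum_comp hK hKU hμ hγK hesc hE
  obtain ⟨ε, hε, hρε⟩ :=
    c.exists_pos_eventually_radialMomentum_le hK hKU hμ hγK hesc hE hU hp₀ hγ
  have hspeed : ∀ᶠ s in atTop, ε ≤ (-c.hamField (γ s)).1 := by
    filter_upwards [hρε, (c.tendsto_hamField_radius_sub hK hKU hμ hγK hesc hE).eventually_le_const
      hε] with s hρ hs
    rw [Prod.fst_neg]
    linarith
  have hq := isBigO_one_of_hasDerivAt_isBigO_rpow_mul hμ hε (hγ.mono fun s hs ↦ hs.fst)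
    (hesc.eventually_gt_atTop 0) hspeed ((hγ.and hγK).mono fun s hs ↦
      c.hasDerivAt_angularEnergy hU hs.1 (hKU hs.2.2.1))
    (hγK.mono fun s hs ↦ c.angularEnergy_nonneg (hKU hs.2.1))
    (c.isBigO_angularEnergyDeriv_comp hK hKU hμ hγK hesc hE hU)
  have hω : (fun s ↦ ‖(γ s).2.2.2‖) =O[atTop] fun _ ↦ (1 : ℝ) :=
    .of_pow two_ne_zero ((((c.isBigO_angularMomentum_sq_angularEnergy hK hKU).comp_tendsto
      (tendsto_principal.2 hγK)).trans hq).congr_right fun _ ↦ (one_pow 2).symm)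
  exact hρ.prod_left hω.of_norm_left

end Coeffs

end EscapingTrajectories

section LinearEscape

variable {κ : ℝ}

lemma exists_pos_forall_inv_mul_abs_sub_lt (hκ : 0 < κ) (a : ℝ) :
    ∃ C > 0, ∀ f : ℝ → ℝ, (∀ t ≤ a, κ * (a - t) ≤ f t) → ∀ t < -C, C⁻¹ * |t| - C < f t := by
  set C := κ⁻¹ + |a| + κ * |a| + 1 with hC
  have hκC : κ⁻¹ ≤ C := by rw [hC]; linarith [mul_nonneg hκ.le (abs_nonneg a), abs_nonneg a]
  have hC0 : 0 < C := (inv_pos.2 hκ).trans_le hκC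
  refine ⟨C, hC0, fun f hf t ht ↦ ?_⟩
  have hta : t ≤ a := by
    linarith [neg_abs_le a, inv_pos.2 hκ, mul_nonneg hκ.le (abs_nonneg a)]
  calc C⁻¹ * |t| - C ≤ κ * |t| - C := by gcongr; exact inv_le_of_inv_le₀ hκ hκC
    _ < κ * (-t) + κ * a := by
      rw [abs_of_neg (by linarith)]
      nlinarith [neg_abs_le a, inv_pos.2 hκ, abs_nonneg a]
    _ ≤ f t := by linarith [hf t hta]

lemma tendsto_atBot_atTop_of_forall_mul_sub_le (hκ : 0 < κ) {a : ℝ} {f : ℝ → ℝ}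
    (hf : ∀ t ≤ a, κ * (a - t) ≤ f t) : Tendsto f atBot atTop :=
  tendsto_atTop_mono' _ ((eventually_le_atBot a).mono hf)
    ((tendsto_atTop_add_const_left _ a tendsto_neg_atBot_atTop).const_mul_atTop hκ)

end LinearEscape

section LocalUniformity

variable {m : ℕ} {μ p₀ : ℝ} {U K : Set (Fin m → ℝ)} {γ : ℝ → Phase m}

lemma Coeffs.exists_nhds_forall_escape (c : Coeffs m μ U) (hK : IsCompact K) (hKU : K ⊆ U)
    (hμ : 0 < μ) (hμ1 : μ ≤ 1) (hU : IsOpen U) (hp₀ : 0 < p₀)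
    (hγ : ∀ s ≥ 0, HasDerivAt γ (-c.hamField (γ s)) s) (hγK : ∀ s ≥ 0, γ s ∈ phaseEnd K)
    (hesc : Tendsto (fun s ↦ (γ s).1) atTop atTop)
    (hE : ∀ᶠ s in atTop, c.hamiltonian (γ s) = p₀) :
    ∃ V ∈ 𝓝 (γ 0), ∃ κ > 0, ∃ b : ℝ, ∀ z ∈ V, ∃ Z : ℝ → Phase m, Z 0 = z ∧
      (∀ s ≥ 0, Z s ∈ phaseEnd U ∧ HasDerivAt Z (-c.hamField (Z s)) s) ∧
      ∀ s ≥ b, κ * (s - b) ≤ (Z s).1 := by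
  have hγ' := (eventually_ge_atTop 0).mono hγ
  have hγK' := (eventually_ge_atTop 0).mono hγK
  obtain ⟨ε, hε, hρ⟩ :=
    c.exists_pos_eventually_radialMomentum_le hK hKU hμ hγK' hesc hE hU hp₀ hγ'
  obtain ⟨M, hM⟩ := exists_forall_norm_le_of_isBigO_one
    (fun s hs ↦ (hγ s hs).continuousAt.snd.snd.continuousWithinAt)
    (c.isBigO_momentum_comp hK hKU hμ hγK' hesc hE hU hp₀ hγ')
  refine (c.isAsymptoticallyRadial_neg_hamField hU hμ1).exists_nhds_forall_escape hμ
    (hU.prod isOpen_univ) (hK.prod (isCompact_closedBall 0 M))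
    (prod_mono hKU (subset_univ _)) hγ (fun s hs ↦ ⟨(hγK s hs).1, (hγK s hs).2.1, ?_⟩) hesc
    (mul_pos two_pos hε) (hρ.mono fun s hs ↦ by linarith)
  exact mem_closedBall_zero_iff.2 (hM s hs)

end LocalUniformity

/-- Lemma 2.1, local uniformity. The escape estimate holds, with a
uniform constant, for all initial conditions in a neighborhood of a backward nontrapped
point; in particular the backward solutions from that neighborhood exist for all `t ≤ T₀`
and are backward nontrapped. -/
theorem statement_5 {m : ℕ} (hm : 1 ≤ m) {μ : ℝ} (hμ : μ ∈ Ioo (0:ℝ) 1)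
    {U : Set (Fin m → ℝ)} (hU : IsOpen U) (c : Coeffs m μ U)
    (K : Set (Fin m → ℝ)) (hK : IsCompact K) (hKU : K ⊆ U) (T₀ : ℝ)
    (r₀ : ℝ) (θ₀ : Fin m → ℝ) (ρ₀ : ℝ) (ω₀ : Fin m → ℝ)
    (r : ℝ → ℝ) (θ : ℝ → Fin m → ℝ) (ρ : ℝ → ℝ) (ω : ℝ → Fin m → ℝ)
    (p₀ : ℝ) (hp₀ : 0 < p₀)
    (hinit : r T₀ = r₀ ∧ θ T₀ = θ₀ ∧ ρ T₀ = ρ₀ ∧ ω T₀ = ω₀)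
    (hdom : ∀ t ≤ T₀, r t ∈ Ioi (1:ℝ) ∧ θ t ∈ K)
    (hsol : IsHamSolOn c.p r θ ρ ω (Iic T₀))
    (hen : ∀ t ≤ T₀, c.p (r t) (θ t) (ρ t) (ω t) = p₀)
    (hesc : Tendsto r atBot atTop) :
    ∃ V ∈ 𝓝 ((r₀, θ₀, ρ₀, ω₀) : Phase m), ∃ C > (0:ℝ),
      ∀ z ∈ V, ∃ (r' : ℝ → ℝ) (θ' : ℝ → Fin m → ℝ) (ρ' : ℝ → ℝ) (ω' : ℝ → Fin m → ℝ),
        ((r' T₀, θ' T₀, ρ' T₀, ω' T₀) : Phase m) = z ∧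
        (∀ t ≤ T₀, r' t ∈ Ioi (1:ℝ) ∧ θ' t ∈ U) ∧
        IsHamSolOn c.p r' θ' ρ' ω' (Iic T₀) ∧
        (∀ t < -C, r' t > C⁻¹ * |t| - C) ∧
        Tendsto r' atBot atTop := by
  obtain ⟨rfl, rfl, rfl, rfl⟩ := hinit
  let γ (s : ℝ) : Phase m := (r (T₀ - s), θ (T₀ - s), ρ (T₀ - s), ω (T₀ - s))
  have hle {s : ℝ} (hs : s ≥ 0) : T₀ - s ≤ T₀ := sub_le_self T₀ hs
  have hsol' := (c.isHamSolOn_iff (Z := fun t ↦ (r t, θ t, ρ t, ω t))).1 hsol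
  obtain ⟨V, hV, κ, hκ, b, hesc'⟩ := c.exists_nhds_forall_escape (γ := γ) hK hKU hμ.1 hμ.2.le hU hp₀
    (fun s hs ↦ (hsol' _ (hle hs)).comp_const_sub T₀ s)
    (fun s hs ↦ ⟨(hdom _ (hle hs)).1, (hdom _ (hle hs)).2, trivial⟩)
    (hesc.comp (tendsto_atBot_add_const_left _ T₀ tendsto_neg_atTop_atBot))
    ((eventually_ge_atTop 0).mono fun s hs ↦ hen _ (hle hs))
  obtain ⟨C, hC, hbound⟩ := exists_pos_forall_inv_mul_abs_sub_lt hκ (T₀ - b)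
  refine ⟨V, by simpa [γ] using hV, C, hC, fun z hz ↦ ?_⟩
  obtain ⟨Z, hZ0, hZ, hZb⟩ := hesc' z hz
  have hlin : ∀ t ≤ T₀ - b, κ * (T₀ - b - t) ≤ (Z (T₀ - t)).1 := fun t ht ↦ by
    simpa only [sub_right_comm] using hZb (T₀ - t) (by linarith)
  refine ⟨fun t ↦ (Z (T₀ - t)).1, fun t ↦ (Z (T₀ - t)).2.1, fun t ↦ (Z (T₀ - t)).2.2.1,
    fun t ↦ (Z (T₀ - t)).2.2.2, by simpa using hZ0, fun t ht ↦ ?_,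
    c.isHamSolOn_iff.2 fun t ht ↦ ?_, hbound _ hlin,
    tendsto_atBot_atTop_of_forall_mul_sub_le hκ hlin⟩
  · exact ⟨(hZ _ (sub_nonneg.2 ht)).1.1, (hZ _ (sub_nonneg.2 ht)).1.2.1⟩
  · simpa using (hZ _ (sub_nonneg.2 ht)).2.comp_const_sub T₀ t

end Scattering
end

section
/- (Angular momentum bound.) Let K ⊆ U be compact, T₀ ∈ ℝ, c₀ > 0, C₀ > 0, and let (r(t),θ(t),ρ(t),ω(t)) : (−∞,T₀] → (1,∞)×K×ℝ×ℝ^{n-1} be a solution of the Hamiltonian system satisfying r(t) ≥ c₀(1+|t|), |ρ(t)| ≤ C₀ and |ω(t)| ≤ C₀·r(t) for all t ≤ T₀. Set L(t) = Σ_{j,k} h^{jk}(θ(t))ω_j(t)ω_k(t). Then there exists C > 0 with |L'(t)| ≤ C·r(t)^{-1-μ}(1 + L(t)) for all t ≤ T₀, and consequently L(t), and hence |ω(t)|, is bounded uniformly for t ≤ T₀. -/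
open Real Set Filter Topology

namespace Scattering

/-!
Write `p = ρ² + r⁻² q + V`, where `q(θ, ω) = Σ h^{jk}(θ) ω_j ω_k` and `V` collects the terms in
`a₀, a₁, a₂`. Along the flow `L = q(θ, ω)` has derivative the Poisson bracket `{p, q}`, and since
`q` depends on neither `r` nor `ρ` the terms `ρ²` and `r⁻² q` drop out: `L' = {V, q}`. On the region
`|ρ| ≤ C₀`, `|ω| ≤ C₀ r` the decay of the coefficients gives `∂_ω V = O(r^{-1-μ})` and
`∂_θ V = O(r^{-1-μ} (1 + |ω|))`, while `∂_θ q = O(|ω|²)` and `∂_ω q = O(|ω|)`; as `q` is uniformly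
coercive over `K`, this yields `|L'| ≤ C r^{-1-μ} (1 + L)`. The linear growth of `r` makes
`r^{-1-μ}` integrable in time, so Grönwall's inequality bounds `L`, and coercivity bounds `ω`.
-/

section QuadForm

variable {ι : Type*} [Fintype ι]

theorem abs_sum_le_card_mul {f : ι → ℝ} {B : ℝ} (hf : ∀ i, |f i| ≤ B) :
    |∑ i, f i| ≤ Fintype.card ι * B :=
  calc |∑ i, f i| ≤ ∑ i, |f i| := Finset.abs_sum_le_sum_abs _ _
    _ ≤ Fintype.card ι * B := by
      simpa using Finset.sum_le_card_nsmul Finset.univ _ B fun i _ => hf i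

/-- The quadratic form `v ↦ Σ A_{jk} v_j v_k` of a square matrix, written as the double sum that
occurs in `energy`. -/
def quadForm (A : Matrix ι ι ℝ) (v : ι → ℝ) : ℝ := ∑ j, ∑ k, A j k * v j * v k

theorem quadForm_eq_dotProduct_mulVec (A : Matrix ι ι ℝ) (v : ι → ℝ) :
    quadForm A v = v ⬝ᵥ A.mulVec v := by
  simp only [quadForm, dotProduct, Matrix.mulVec, Finset.mul_sum]
  exact Fintype.sum_congr _ _ fun j => Fintype.sum_congr _ _ fun k => by ring

theorem quadForm_pos {A : Matrix ι ι ℝ} (hA : A.PosDef) {v : ι → ℝ} (hv : v ≠ 0) :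
    0 < quadForm A v := by
  simpa [quadForm_eq_dotProduct_mulVec] using hA.dotProduct_mulVec_pos hv

theorem quadForm_smul (A : Matrix ι ι ℝ) (a : ℝ) (v : ι → ℝ) :
    quadForm A (a • v) = a ^ 2 * quadForm A v := by
  simp only [quadForm_eq_dotProduct_mulVec, Matrix.mulVec_smul, smul_dotProduct, dotProduct_smul,
    smul_eq_mul]
  ring

theorem abs_quadForm_le {A : Matrix ι ι ℝ} {B : ℝ} (hA : ∀ j k, |A j k| ≤ B) (v : ι → ℝ) :
    |quadForm A v| ≤ Fintype.card ι ^ 2 * (B * ‖v‖ ^ 2) := by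
  have entry_le (j k : ι) : |A j k * v j * v k| ≤ B * ‖v‖ ^ 2 := by
    have hB : 0 ≤ B := (abs_nonneg _).trans (hA j k)
    calc |A j k * v j * v k| = |A j k| * |v j| * |v k| := by rw [abs_mul, abs_mul]
      _ ≤ B * ‖v‖ * ‖v‖ := by
        gcongr
        exacts [hA j k, norm_le_pi_norm v j, norm_le_pi_norm v k]
      _ = B * ‖v‖ ^ 2 := by ring
  calc |quadForm A v| ≤ Fintype.card ι * (Fintype.card ι * (B * ‖v‖ ^ 2)) :=
        abs_sum_le_card_mul fun j => abs_sum_le_card_mul (entry_le j)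
    _ = Fintype.card ι ^ 2 * (B * ‖v‖ ^ 2) := by ring

theorem hasFDerivAt_quadForm (A : Matrix ι ι ℝ) (v : ι → ℝ) :
    HasFDerivAt (quadForm A)
      (∑ j, ∑ k, ((A j k * v j) • ContinuousLinearMap.proj (R := ℝ) (φ := fun _ : ι => ℝ) k +
        v k • A j k • ContinuousLinearMap.proj (R := ℝ) (φ := fun _ : ι => ℝ) j)) v :=
  HasFDerivAt.fun_sum fun j _ => HasFDerivAt.fun_sum fun k _ =>
    ((hasFDerivAt_apply j v).const_mul (A j k)).mul (hasFDerivAt_apply k v)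

theorem abs_fderiv_quadForm_apply_le {A : Matrix ι ι ℝ} {B : ℝ} (hA : ∀ j k, |A j k| ≤ B)
    (v u : ι → ℝ) :
    |fderiv ℝ (quadForm A) v u| ≤ Fintype.card ι ^ 2 * (2 * B * ‖v‖ * ‖u‖) := by
  have fderiv_apply : fderiv ℝ (quadForm A) v u =
      ∑ j, ∑ k, A j k * (v j * u k + v k * u j) := by
    simp only [(hasFDerivAt_quadForm A v).fderiv, sum_apply, add_apply, smul_apply,
      ContinuousLinearMap.proj_apply, smul_eq_mul]
    exact Fintype.sum_congr _ _ fun j => Fintype.sum_congr _ _ fun k => by ring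
  have entry_le (j k : ι) : |A j k * (v j * u k + v k * u j)| ≤ 2 * B * ‖v‖ * ‖u‖ := by
    have hB : 0 ≤ B := (abs_nonneg _).trans (hA j k)
    have hv (i : ι) : |v i| ≤ ‖v‖ := norm_le_pi_norm v i
    have hu (i : ι) : |u i| ≤ ‖u‖ := norm_le_pi_norm u i
    calc |A j k * (v j * u k + v k * u j)| = |A j k| * |v j * u k + v k * u j| := abs_mul _ _
      _ ≤ |A j k| * (|v j * u k| + |v k * u j|) := by
        gcongr
        exact abs_add_le _ _
      _ ≤ B * (‖v‖ * ‖u‖ + ‖v‖ * ‖u‖) := by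
        rw [abs_mul, abs_mul]
        gcongr
        exacts [hA j k, hv j, hu k, hv k, hu j]
      _ = 2 * B * ‖v‖ * ‖u‖ := by ring
  rw [fderiv_apply]
  calc |∑ j, ∑ k, A j k * (v j * u k + v k * u j)|
      ≤ Fintype.card ι * (Fintype.card ι * (2 * B * ‖v‖ * ‖u‖)) :=
        abs_sum_le_card_mul fun j => abs_sum_le_card_mul (entry_le j)
    _ = Fintype.card ι ^ 2 * (2 * B * ‖v‖ * ‖u‖) := by ring

theorem exists_pos_mul_norm_sq_le_quadForm {X : Type*} [TopologicalSpace X] {K : Set X}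
    (hK : IsCompact K) {A : X → Matrix ι ι ℝ} (hA : ∀ j k, ContinuousOn (fun x => A x j k) K)
    (hpos : ∀ x ∈ K, (A x).PosDef) :
    ∃ l > 0, ∀ x ∈ K, ∀ v, l * ‖v‖ ^ 2 ≤ quadForm (A x) v := by
  have hcont : ContinuousOn (fun z : X × (ι → ℝ) => quadForm (A z.1) z.2)
      (K ×ˢ Metric.sphere 0 1) := by
    refine continuousOn_finsetSum _ fun j _ => continuousOn_finsetSum _ fun k _ => ?_
    have hAjk : ContinuousOn (fun z : X × (ι → ℝ) => A z.1 j k) (K ×ˢ Metric.sphere 0 1) :=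
      (hA j k).comp continuousOn_fst fun z hz => hz.1
    exact (hAjk.mul (by fun_prop)).mul (by fun_prop)
  obtain ⟨l, hl, hsphere⟩ := (hK.prod (isCompact_sphere 0 1)).exists_forall_le' hcont
    fun z hz => quadForm_pos (hpos z.1 hz.1) (Metric.ne_of_mem_sphere hz.2 one_ne_zero)
  refine ⟨l, hl, fun x hx v => ?_⟩
  rcases eq_or_ne v 0 with rfl | hv
  · simp [quadForm]
  have hunit : ‖v‖⁻¹ • v ∈ Metric.sphere (0 : ι → ℝ) 1 := by simp [norm_smul, hv]
  calc l * ‖v‖ ^ 2 ≤ quadForm (A x) (‖v‖⁻¹ • v) * ‖v‖ ^ 2 := by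
        gcongr
        exact hsphere (x, ‖v‖⁻¹ • v) ⟨hx, hunit⟩
    _ = quadForm (A x) v := by
      rw [quadForm_smul]
      field_simp [norm_ne_zero_iff.2 hv]

variable {E : Type*} [NormedAddCommGroup E] [NormedSpace ℝ E] {A : E → Matrix ι ι ℝ} {x : E}

theorem differentiableAt_quadForm_comp (hA : ∀ j k, DifferentiableAt ℝ (fun y => A y j k) x)
    (v : ι → ℝ) :
    DifferentiableAt ℝ (fun z : E × (ι → ℝ) => quadForm (A z.1) z.2) (x, v) := by
  refine DifferentiableAt.fun_sum fun j _ => DifferentiableAt.fun_sum fun k _ => ?_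
  have hAjk : DifferentiableAt ℝ (fun z : E × (ι → ℝ) => A z.1 j k) (x, v) :=
    DifferentiableAt.comp (g := fun y => A y j k) (x, v) (hA j k) differentiableAt_fst
  exact (hAjk.mul (by fun_prop)).mul (by fun_prop)

theorem hasFDerivAt_quadForm_matrix (hA : ∀ j k, DifferentiableAt ℝ (fun y => A y j k) x)
    (v : ι → ℝ) :
    HasFDerivAt (fun y => quadForm (A y) v)
      (∑ j, ∑ k, v k • v j • fderiv ℝ (fun y => A y j k) x) x :=
  HasFDerivAt.fun_sum fun j _ => HasFDerivAt.fun_sum fun k _ =>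
    ((hA j k).hasFDerivAt.mul_const (v j)).mul_const (v k)

theorem fderiv_quadForm_matrix_apply (hA : ∀ j k, DifferentiableAt ℝ (fun y => A y j k) x)
    (v : ι → ℝ) (u : E) :
    fderiv ℝ (fun y => quadForm (A y) v) x u =
      quadForm (Matrix.of fun j k => fderiv ℝ (fun y => A y j k) x u) v := by
  rw [(hasFDerivAt_quadForm_matrix hA v).fderiv]
  simp only [sum_apply, smul_apply, smul_eq_mul, quadForm, Matrix.of_apply]
  exact Fintype.sum_congr _ _ fun j => Fintype.sum_congr _ _ fun k => by ring

end QuadForm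

section ProductCalculus

variable {E F G : Type*} [NormedAddCommGroup E] [NormedSpace ℝ E] [NormedAddCommGroup F]
  [NormedSpace ℝ F] [NormedAddCommGroup G] [NormedSpace ℝ G]

theorem differentiableAt_of_contDiffOn_prod {f : E → F → G} {V : Set E} {U : Set F}
    (hV : IsOpen V) (hU : IsOpen U) {n : WithTop ℕ∞} (hn : n ≠ 0)
    (hf : ContDiffOn ℝ n (fun z : E × F => f z.1 z.2) (V ×ˢ U)) {x : E} (hx : x ∈ V) {y : F}
    (hy : y ∈ U) : DifferentiableAt ℝ (f x) y :=
  have hxy : DifferentiableAt ℝ (fun z : E × F => f z.1 z.2) (x, y) :=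
    (hf.contDiffAt ((hV.prod hU).mem_nhds (mk_mem_prod hx hy))).differentiableAt hn
  hxy.comp y ((differentiableAt_const x).prodMk differentiableAt_id)

theorem hasDerivAt_comp₂ {q : E → F → G} {x : ℝ → E} {y : ℝ → F} {x' : E} {y' : F} {t : ℝ}
    (hq : DifferentiableAt ℝ (fun z : E × F => q z.1 z.2) (x t, y t)) (hx : HasDerivAt x x' t)
    (hy : HasDerivAt y y' t) :
    HasDerivAt (fun s => q (x s) (y s))
      (fderiv ℝ (fun a => q a (y t)) (x t) x' + fderiv ℝ (q (x t)) (y t) y') t := by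
  set D := fderiv ℝ (fun z : E × F => q z.1 z.2) (x t, y t)
  have hD : HasFDerivAt (fun z : E × F => q z.1 z.2) D (x t, y t) := hq.hasFDerivAt
  have partial_left : HasFDerivAt (fun a => q a (y t)) (D ∘L .inl ℝ E F) (x t) :=
    HasFDerivAt.comp (g := fun z : E × F => q z.1 z.2) (f := fun a => (a, y t)) (x t) hD
      (hasFDerivAt_prodMk_left (x t) (y t))
  have partial_right : HasFDerivAt (q (x t)) (D ∘L .inr ℝ E F) (y t) :=
    HasFDerivAt.comp (g := fun z : E × F => q z.1 z.2) (f := fun b => (x t, b)) (y t) hD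
      (hasFDerivAt_prodMk_right (x t) (y t))
  refine (hD.comp_hasDerivAt t (hx.prodMk hy)).congr_deriv ?_
  rw [partial_left.fderiv, partial_right.fderiv]
  simp [← map_add]

theorem apply_eq_sum_mul_apply_single {ι : Type*} [Fintype ι] [DecidableEq ι]
    (T : (ι → ℝ) →L[ℝ] ℝ) (v : ι → ℝ) : T v = ∑ j, v j * T (Pi.single j 1) := by
  conv_lhs => rw [pi_eq_sum_univ' v]
  simp only [map_sum, map_smul, smul_eq_mul]

end ProductCalculus

section UniformBounds

variable {ι : Type*}

theorem exists_forall_abs_le_and_norm_fderiv_le [Finite ι] {E : Type*} [NormedAddCommGroup E]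
    [NormedSpace ℝ E] {U K : Set E} (hU : IsOpen U) (hK : IsCompact K) (hKU : K ⊆ U)
    {f : ι → E → ℝ} (hf : ∀ i, ContDiffOn ℝ 1 (f i) U) :
    ∃ C ≥ 0, ∀ i, ∀ x ∈ K, |f i x| ≤ C ∧ ‖fderiv ℝ (f i) x‖ ≤ C := by
  have := Fintype.ofFinite ι
  have hcont : ContinuousOn (fun x i => (f i x, fderiv ℝ (f i) x)) K :=
    continuousOn_pi.2 fun i => ((hf i).continuousOn.mono hKU).prodMk
      (((hf i).continuousOn_fderiv_of_isOpen hU le_rfl).mono hKU)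
  obtain ⟨C, hC⟩ := hK.exists_bound_of_continuousOn hcont
  refine ⟨max C 0, le_max_right _ _, fun i x hx => ?_⟩
  have hi : ‖(f i x, fderiv ℝ (f i) x)‖ ≤ max C 0 :=
    (norm_le_pi_norm (fun i => (f i x, fderiv ℝ (f i) x)) i).trans (le_max_of_le_left (hC x hx))
  exact ⟨(norm_fst_le _).trans hi, (norm_snd_le _).trans hi⟩

theorem exists_forall_abs_le_and_abs_pderivTheta_le [Finite ι] {m : ℕ} {K : Set (Fin m → ℝ)}
    {S ν : ℝ} (hS : 0 ≤ S) {f : ι → ℝ → (Fin m → ℝ) → ℝ} (hf : ∀ i, DecayOn (f i) ν S K) :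
    ∃ C ≥ 0, ∀ i, ∀ r ∈ Ioi S, ∀ θ ∈ K,
      |f i r θ| ≤ C * r ^ (-ν) ∧ ∀ l, |pderivTheta l (f i) r θ| ≤ C * r ^ (-ν) := by
  -- `none` stands for the function itself and `some l` for its derivative in direction `l`.
  choose C _ hC using fun i (o : Option (Fin m)) => hf i 0 o.toList
  obtain ⟨M, hM⟩ := Finite.exists_le fun z : ι × Option (Fin m) => C z.1 z.2
  refine ⟨max M 0, le_max_right _ _, fun i r hr θ hθ => ?_⟩
  have bound (o : Option (Fin m)) : |thetaDerivs o.toList (f i) r θ| ≤ max M 0 * r ^ (-ν) := by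
    have hr0 : 0 ≤ r := hS.trans (le_of_lt hr)
    calc |thetaDerivs o.toList (f i) r θ| ≤ C i o * r ^ (-ν) := by simpa using hC i o r hr θ hθ
      _ ≤ max M 0 * r ^ (-ν) := by
        gcongr
        exact le_max_of_le_left (hM (i, o))
  exact ⟨bound none, fun l => bound (some l)⟩

end UniformBounds

section EuclideanNorm

variable {m : ℕ}

theorem norm_le_eNorm (v : Fin m → ℝ) : ‖v‖ ≤ eNorm v :=
  (pi_norm_le_iff_of_nonneg (Real.sqrt_nonneg _)).2 fun i =>
    Real.abs_le_sqrt (Finset.single_le_sum (f := fun j => v j ^ 2) (fun _ _ => sq_nonneg _)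
      (Finset.mem_univ i))

theorem eNorm_le_sqrt_mul_norm (v : Fin m → ℝ) : eNorm v ≤ √m * ‖v‖ := by
  rw [← Real.sqrt_sq (norm_nonneg v), ← Real.sqrt_mul (Nat.cast_nonneg m)]
  refine Real.sqrt_le_sqrt ?_
  calc ∑ j, v j ^ 2 ≤ ∑ _j : Fin m, ‖v‖ ^ 2 :=
        Finset.sum_le_sum fun j _ => sq_le_sq' (neg_le_of_abs_le (norm_le_pi_norm v j))
          ((le_abs_self _).trans (norm_le_pi_norm v j))
    _ = m * ‖v‖ ^ 2 := by simp

theorem eNorm_le_of_mul_norm_sq_le {l B : ℝ} (hl : 0 < l) {v : Fin m → ℝ}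
    (hv : l * ‖v‖ ^ 2 ≤ B) : eNorm v ≤ √m * √(l⁻¹ * B) :=
  calc eNorm v ≤ √m * ‖v‖ := eNorm_le_sqrt_mul_norm v
    _ ≤ √m * √(l⁻¹ * B) := by
      gcongr
      exact Real.le_sqrt_of_sq_le ((le_inv_mul_iff₀ hl).2 hv)

end EuclideanNorm

section Gronwall

theorem le_mul_exp_integral_Iic_of_abs_deriv_le {T : ℝ} {F F' g : ℝ → ℝ}
    (hF : ∀ t ≤ T, 0 < F t) (hderiv : ∀ t ≤ T, HasDerivAt F (F' t) t)
    (hg : MeasureTheory.IntegrableOn g (Iic T)) (hF' : ∀ t ≤ T, |F' t| ≤ g t * F t)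
    {t : ℝ} (ht : t ≤ T) :
    F t ≤ F T * Real.exp (∫ s in Iic T, g s) := by
  have neg_log_deriv (s : ℝ) (hs : s ≤ T) :
      HasDerivAt (fun s => -Real.log (F s)) (-(F' s / F s)) s :=
    ((hderiv s hs).log (hF s hs).ne').neg
  have neg_log_deriv_le (s : ℝ) (hs : s ≤ T) : -(F' s / F s) ≤ g s := by
    rw [← neg_div, div_le_iff₀ (hF s hs)]
    exact (neg_le_abs _).trans (hF' s hs)
  have g_nonneg (s : ℝ) (hs : s ≤ T) : 0 ≤ g s :=
    nonneg_of_mul_nonneg_left ((abs_nonneg _).trans (hF' s hs)) (hF s hs)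
  have log_sub_le : -Real.log (F T) - -Real.log (F t) ≤ ∫ s in t..T, g s :=
    intervalIntegral.sub_le_integral_of_hasDeriv_right_of_le ht
      (fun s hs => (neg_log_deriv s hs.2).continuousAt.continuousWithinAt)
      (fun s hs => (neg_log_deriv s hs.2.le).hasDerivWithinAt)
      (hg.mono_set Icc_subset_Iic_self) (fun s hs => neg_log_deriv_le s hs.2.le)
  have integral_le : ∫ s in t..T, g s ≤ ∫ s in Iic T, g s := by
    rw [intervalIntegral.integral_of_le ht]
    exact MeasureTheory.setIntegral_mono_set hg
      (MeasureTheory.ae_restrict_of_forall_mem measurableSet_Iic g_nonneg)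
      Ioc_subset_Iic_self.eventuallyLE
  rw [← Real.log_le_log_iff (hF t ht) (mul_pos (hF T le_rfl) (Real.exp_pos _)),
    Real.log_mul (hF T le_rfl).ne' (Real.exp_pos _).ne', Real.log_exp]
  linarith

theorem integrable_mul_one_add_abs_rpow {c μ : ℝ} (hc : 0 ≤ c) (hμ : 0 < μ) :
    MeasureTheory.Integrable fun t : ℝ => (c * (1 + |t|)) ^ (-1 - μ) := by
  have hint : MeasureTheory.Integrable fun t : ℝ => (1 + ‖t‖) ^ (-(1 + μ)) :=
    integrable_one_add_norm (by simpa using hμ)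
  refine (hint.const_mul (c ^ (-1 - μ))).congr (Eventually.of_forall fun t => ?_)
  simp only [Real.norm_eq_abs, neg_add']
  rw [Real.mul_rpow hc (by positivity)]

theorem exists_forall_le_of_abs_deriv_le_rpow {μ T c C : ℝ} (hμ : 0 < μ) (hc : 0 < c)
    (hC : 0 ≤ C) {r L : ℝ → ℝ} (hr : ∀ t ≤ T, c * (1 + |t|) ≤ r t) (hL : ∀ t ≤ T, 0 ≤ L t)
    (hL' : ∀ t ≤ T, ∃ L', HasDerivAt L L' t ∧ |L'| ≤ C * r t ^ (-1 - μ) * (1 + L t)) :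
    ∃ B, ∀ t ≤ T, L t ≤ B := by
  choose! L' hderiv hbound using hL'
  let g : ℝ → ℝ := fun t => C * (c * (1 + |t|)) ^ (-1 - μ)
  have hg : MeasureTheory.Integrable g := (integrable_mul_one_add_abs_rpow hc.le hμ).const_mul C
  have one_add_pos (t : ℝ) (ht : t ≤ T) : 0 < 1 + L t := by linarith [hL t ht]
  have hbound_g (t : ℝ) (ht : t ≤ T) : |L' t| ≤ g t * (1 + L t) := by
    have hrpow : r t ^ (-1 - μ) ≤ (c * (1 + |t|)) ^ (-1 - μ) :=
      Real.rpow_le_rpow_of_nonpos (by positivity) (hr t ht) (by linarith)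
    have := one_add_pos t ht
    exact (hbound t ht).trans (by dsimp only [g]; gcongr)
  refine ⟨(1 + L T) * Real.exp (∫ s in Iic T, g s) - 1, fun t ht => ?_⟩
  have := le_mul_exp_integral_Iic_of_abs_deriv_le one_add_pos
    (fun s hs => (hderiv s hs).const_add 1) hg.integrableOn hbound_g ht
  linarith

end Gronwall

section AngularBracket

variable {m : ℕ}

/-- The part `Σ_j (∂F/∂ω_j ∂G/∂θ_j - ∂F/∂θ_j ∂G/∂ω_j)` of the Poisson bracket `{F, G}` in the
angular variables. It is the whole bracket when `G` does not depend on `r` and `ρ`. -/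
noncomputable def angularBracket (F G : ℝ → (Fin m → ℝ) → ℝ → (Fin m → ℝ) → ℝ)
    (r : ℝ) (θ : Fin m → ℝ) (ρ : ℝ) (ω : Fin m → ℝ) : ℝ :=
  ∑ j, (pdOmega F j r θ ρ ω * pdTheta G j r θ ρ ω - pdTheta F j r θ ρ ω * pdOmega G j r θ ρ ω)

theorem abs_angularBracket_le {F G : ℝ → (Fin m → ℝ) → ℝ → (Fin m → ℝ) → ℝ} {r ρ : ℝ}
    {θ ω : Fin m → ℝ} {a b d e : ℝ}
    (hFω : ∀ j, |pdOmega F j r θ ρ ω| ≤ a) (hGθ : ∀ j, |pdTheta G j r θ ρ ω| ≤ b)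
    (hFθ : ∀ j, |pdTheta F j r θ ρ ω| ≤ d) (hGω : ∀ j, |pdOmega G j r θ ρ ω| ≤ e) :
    |angularBracket F G r θ ρ ω| ≤ m * (a * b + d * e) := by
  refine (abs_sum_le_card_mul fun j => ?_).trans_eq (by rw [Fintype.card_fin])
  refine (abs_sub _ _).trans ?_
  rw [abs_mul, abs_mul]
  exact add_le_add
    (mul_le_mul (hFω j) (hGθ j) (abs_nonneg _) ((abs_nonneg _).trans (hFω j)))
    (mul_le_mul (hFθ j) (hGω j) (abs_nonneg _) ((abs_nonneg _).trans (hFθ j)))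

theorem angularBracket_add_mul_self_add (f κ : ℝ → ℝ → ℝ)
    {G V : ℝ → (Fin m → ℝ) → ℝ → (Fin m → ℝ) → ℝ} {r ρ : ℝ} {θ ω : Fin m → ℝ}
    (hGθ : DifferentiableAt ℝ (fun x => G r x ρ ω) θ) (hGω : DifferentiableAt ℝ (G r θ ρ) ω)
    (hVθ : DifferentiableAt ℝ (fun x => V r x ρ ω) θ) (hVω : DifferentiableAt ℝ (V r θ ρ) ω) :
    angularBracket (fun r θ ρ ω => f r ρ + κ r ρ * G r θ ρ ω + V r θ ρ ω) G r θ ρ ω =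
      angularBracket V G r θ ρ ω := by
  have hθ := ((hGθ.hasFDerivAt.const_mul (κ r ρ)).const_add (f r ρ)).fun_add hVθ.hasFDerivAt
  have hω := ((hGω.hasFDerivAt.const_mul (κ r ρ)).const_add (f r ρ)).fun_add hVω.hasFDerivAt
  refine Fintype.sum_congr _ _ fun j => ?_
  simp only [pdOmega, pdTheta]
  rw [hθ.fderiv, hω.fderiv]
  simp only [add_apply, smul_apply, smul_eq_mul]
  ring

theorem IsHamSolOn.hasDerivAt_angularBracket {p : ℝ → (Fin m → ℝ) → ℝ → (Fin m → ℝ) → ℝ}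
    {r : ℝ → ℝ} {θ : ℝ → Fin m → ℝ} {ρ : ℝ → ℝ} {ω : ℝ → Fin m → ℝ} {I : Set ℝ}
    (hsol : IsHamSolOn p r θ ρ ω I) {t : ℝ} (ht : t ∈ I)
    {q : (Fin m → ℝ) → (Fin m → ℝ) → ℝ}
    (hq : DifferentiableAt ℝ (fun z : (Fin m → ℝ) × (Fin m → ℝ) => q z.1 z.2) (θ t, ω t)) :
    HasDerivAt (fun s => q (θ s) (ω s))
      (angularBracket p (fun _ θ _ ω => q θ ω) (r t) (θ t) (ρ t) (ω t)) t := by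
  obtain ⟨-, hθ, -, hω⟩ := hsol t ht
  refine (hasDerivAt_comp₂ hq (hasDerivAt_pi.2 hθ) (hasDerivAt_pi.2 hω)).congr_deriv ?_
  rw [apply_eq_sum_mul_apply_single, apply_eq_sum_mul_apply_single, ← Finset.sum_add_distrib]
  simp only [angularBracket, pdTheta, pdOmega, neg_mul, sub_eq_add_neg]

end AngularBracket

section Energy

variable {m : ℕ}

/-- The squared angular momentum `q = Σ h^{jk}(θ) ω_j ω_k`, as a phase space function. -/
def angularMomentumSq (hM : (Fin m → ℝ) → Matrix (Fin m) (Fin m) ℝ) :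
    ℝ → (Fin m → ℝ) → ℝ → (Fin m → ℝ) → ℝ :=
  fun _ θ _ ω => quadForm (hM θ) ω

/-- The deviation `V = a₀ ρ² + r⁻¹ Σ a₁^j ρ ω_j + r⁻² Σ a₂^{jk} ω_j ω_k` of `energy` from the energy
`ρ² + r⁻² Σ h^{jk} ω_j ω_k` of the exact cone. -/
noncomputable def perturbation (a0 : ℝ → (Fin m → ℝ) → ℝ) (a1 : ℝ → (Fin m → ℝ) → Fin m → ℝ)
    (a2 : ℝ → (Fin m → ℝ) → Matrix (Fin m) (Fin m) ℝ) :
    ℝ → (Fin m → ℝ) → ℝ → (Fin m → ℝ) → ℝ :=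
  fun r θ ρ ω =>
    a0 r θ * ρ ^ 2 + (∑ j, a1 r θ j * ρ * ω j) / r + quadForm (a2 r θ) ω / r ^ 2

theorem energy_eq_add_perturbation (hM : (Fin m → ℝ) → Matrix (Fin m) (Fin m) ℝ)
    (a0 : ℝ → (Fin m → ℝ) → ℝ) (a1 : ℝ → (Fin m → ℝ) → Fin m → ℝ)
    (a2 : ℝ → (Fin m → ℝ) → Matrix (Fin m) (Fin m) ℝ) :
    energy hM a0 a1 a2 = fun r θ ρ ω =>
      ρ ^ 2 + (r ^ 2)⁻¹ * angularMomentumSq hM r θ ρ ω + perturbation a0 a1 a2 r θ ρ ω := by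
  funext r θ ρ ω
  simp only [energy, angularMomentumSq, perturbation, quadForm]
  ring

variable {a0 : ℝ → (Fin m → ℝ) → ℝ} {a1 : ℝ → (Fin m → ℝ) → Fin m → ℝ}
  {a2 : ℝ → (Fin m → ℝ) → Matrix (Fin m) (Fin m) ℝ} {r ρ : ℝ} {θ ω : Fin m → ℝ}

theorem hasFDerivAt_perturbation_omega :
    HasFDerivAt (perturbation a0 a1 a2 r θ ρ)
      (r⁻¹ • (∑ j, (a1 r θ j * ρ) • ContinuousLinearMap.proj (R := ℝ) (φ := fun _ : Fin m => ℝ) j) +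
        (r ^ 2)⁻¹ • fderiv ℝ (quadForm (a2 r θ)) ω) ω := by
  have hlin : HasFDerivAt (fun w : Fin m → ℝ => ∑ j, a1 r θ j * ρ * w j)
      (∑ j, (a1 r θ j * ρ) • ContinuousLinearMap.proj (R := ℝ) (φ := fun _ : Fin m => ℝ) j) ω :=
    HasFDerivAt.fun_sum fun j _ => (hasFDerivAt_apply j ω).const_mul _
  have hquad := (hasFDerivAt_quadForm (a2 r θ) ω).differentiableAt.hasFDerivAt
  exact ((hlin.mul_const r⁻¹).const_add (a0 r θ * ρ ^ 2)).add (hquad.mul_const (r ^ 2)⁻¹)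

theorem pdOmega_perturbation (l : Fin m) :
    pdOmega (perturbation a0 a1 a2) l r θ ρ ω =
      a1 r θ l * ρ / r + fderiv ℝ (quadForm (a2 r θ)) ω (Pi.single l 1) / r ^ 2 := by
  rw [pdOmega, hasFDerivAt_perturbation_omega.fderiv]
  simp only [add_apply, smul_apply, sum_apply, ContinuousLinearMap.proj_apply, smul_eq_mul,
    Pi.single_apply, mul_ite, mul_one, mul_zero, Finset.sum_ite_eq', Finset.mem_univ, if_true]
  ring

theorem hasFDerivAt_perturbation_theta (h0 : DifferentiableAt ℝ (a0 r) θ)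
    (h1 : ∀ j, DifferentiableAt ℝ (fun x => a1 r x j) θ)
    (h2 : ∀ j k, DifferentiableAt ℝ (fun x => a2 r x j k) θ) :
    HasFDerivAt (fun x => perturbation a0 a1 a2 r x ρ ω)
      (ρ ^ 2 • fderiv ℝ (a0 r) θ +
        r⁻¹ • (∑ j, ω j • ρ • fderiv ℝ (fun x => a1 r x j) θ) +
        (r ^ 2)⁻¹ • fderiv ℝ (fun x => quadForm (a2 r x) ω) θ) θ := by
  have hlin : HasFDerivAt (fun x => ∑ j, a1 r x j * ρ * ω j)
      (∑ j, ω j • ρ • fderiv ℝ (fun x => a1 r x j) θ) θ :=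
    HasFDerivAt.fun_sum fun j _ => ((h1 j).hasFDerivAt.mul_const ρ).mul_const (ω j)
  have hquad := (hasFDerivAt_quadForm_matrix h2 ω).differentiableAt.hasFDerivAt
  exact ((h0.hasFDerivAt.mul_const (ρ ^ 2)).add (hlin.mul_const r⁻¹)).add
    (hquad.mul_const (r ^ 2)⁻¹)

theorem pdTheta_perturbation (h0 : DifferentiableAt ℝ (a0 r) θ)
    (h1 : ∀ j, DifferentiableAt ℝ (fun x => a1 r x j) θ)
    (h2 : ∀ j k, DifferentiableAt ℝ (fun x => a2 r x j k) θ) (l : Fin m) :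
    pdTheta (perturbation a0 a1 a2) l r θ ρ ω =
      pderivTheta l a0 r θ * ρ ^ 2 +
        (∑ j, pderivTheta l (fun r x => a1 r x j) r θ * ρ * ω j) / r +
        quadForm (Matrix.of fun j k => pderivTheta l (fun r x => a2 r x j k) r θ) ω / r ^ 2 := by
  rw [pdTheta, (hasFDerivAt_perturbation_theta h0 h1 h2).fderiv]
  simp only [add_apply, smul_apply, sum_apply, smul_eq_mul, fderiv_quadForm_matrix_apply h2,
    pderivTheta]
  have hlin (f : Fin m → ℝ) : ∑ j, ω j * (ρ * f j) = ∑ j, f j * ρ * ω j :=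
    Fintype.sum_congr _ _ fun j => by ring
  rw [hlin]
  ring

variable {B C₀ : ℝ} {l : Fin m}

theorem abs_pdOmega_perturbation_le (hr : 0 < r) (hρ : |ρ| ≤ C₀) (hω : ‖ω‖ ≤ C₀ * r)
    (h1 : |a1 r θ l| ≤ B) (h2 : ∀ j k, |a2 r θ j k| ≤ B) :
    |pdOmega (perturbation a0 a1 a2) l r θ ρ ω| ≤ (1 + 2 * m ^ 2) * C₀ * (B / r) := by
  have hB : 0 ≤ B := (abs_nonneg _).trans h1
  have hlin : |a1 r θ l * ρ / r| ≤ B * C₀ / r := by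
    rw [abs_div, abs_mul, abs_of_pos hr]
    gcongr
  have hquad : |fderiv ℝ (quadForm (a2 r θ)) ω (Pi.single l 1) / r ^ 2| ≤
      m ^ 2 * (2 * B * (C₀ * r)) / r ^ 2 := by
    rw [abs_div, abs_of_pos (by positivity : 0 < r ^ 2)]
    gcongr
    calc |fderiv ℝ (quadForm (a2 r θ)) ω (Pi.single l 1)| ≤ m ^ 2 * (2 * B * ‖ω‖) := by
          simpa [Pi.norm_single] using abs_fderiv_quadForm_apply_le h2 ω (Pi.single l 1)
      _ ≤ m ^ 2 * (2 * B * (C₀ * r)) := by gcongr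
  rw [pdOmega_perturbation]
  calc _ ≤ B * C₀ / r + m ^ 2 * (2 * B * (C₀ * r)) / r ^ 2 :=
        (abs_add_le _ _).trans (add_le_add hlin hquad)
    _ = (1 + 2 * m ^ 2) * C₀ * (B / r) := by field_simp

theorem abs_pdTheta_perturbation_le (h0 : DifferentiableAt ℝ (a0 r) θ)
    (h1 : ∀ j, DifferentiableAt ℝ (fun x => a1 r x j) θ)
    (h2 : ∀ j k, DifferentiableAt ℝ (fun x => a2 r x j k) θ)
    (hr : 0 < r) (hρ : |ρ| ≤ C₀) (hω : ‖ω‖ ≤ C₀ * r)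
    (hb0 : |pderivTheta l a0 r θ| ≤ B / r)
    (hb1 : ∀ j, |pderivTheta l (fun r x => a1 r x j) r θ| ≤ B)
    (hb2 : ∀ j k, |pderivTheta l (fun r x => a2 r x j k) r θ| ≤ B) :
    |pdTheta (perturbation a0 a1 a2) l r θ ρ ω| ≤
      (C₀ ^ 2 + (m + m ^ 2) * C₀ * ‖ω‖) * (B / r) := by
  have hB : 0 ≤ B := (abs_nonneg _).trans (hb1 l)
  have hC₀ : 0 ≤ C₀ := (abs_nonneg _).trans hρ
  have hconst : |pderivTheta l a0 r θ * ρ ^ 2| ≤ B / r * C₀ ^ 2 := by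
    rw [abs_mul, abs_pow]
    gcongr
  have hlin : |(∑ j, pderivTheta l (fun r x => a1 r x j) r θ * ρ * ω j) / r| ≤
      m * (B * C₀ * ‖ω‖) / r := by
    rw [abs_div, abs_of_pos hr]
    gcongr
    refine (abs_sum_le_card_mul fun j => ?_).trans_eq (by rw [Fintype.card_fin])
    rw [abs_mul, abs_mul]
    gcongr
    exacts [hb1 j, norm_le_pi_norm ω j]
  have hquad : |quadForm (Matrix.of fun j k => pderivTheta l (fun r x => a2 r x j k) r θ) ω
      / r ^ 2| ≤ m ^ 2 * (B * (‖ω‖ * (C₀ * r))) / r ^ 2 := by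
    rw [abs_div, abs_of_pos (by positivity : 0 < r ^ 2)]
    gcongr
    refine (abs_quadForm_le (B := B) hb2 ω).trans ?_
    rw [Fintype.card_fin, sq ‖ω‖]
    gcongr
  rw [pdTheta_perturbation h0 h1 h2]
  calc _ ≤ B / r * C₀ ^ 2 + m * (B * C₀ * ‖ω‖) / r + m ^ 2 * (B * (‖ω‖ * (C₀ * r))) / r ^ 2 :=
        (abs_add_le _ _).trans
          (add_le_add ((abs_add_le _ _).trans (add_le_add hconst hlin)) hquad)
    _ = (C₀ ^ 2 + (m + m ^ 2) * C₀ * ‖ω‖) * (B / r) := by field_simp; ring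

end Energy

/-- The phase points over `(1, ∞) × K` with `|ρ| ≤ C₀` and `|ω| ≤ C₀ r`, where the perturbation is
estimated. Here `|ω|` is the sup norm, which `eNorm` dominates. -/
structure IsMomentumBounded {m : ℕ} (K : Set (Fin m → ℝ)) (C₀ r : ℝ) (θ : Fin m → ℝ) (ρ : ℝ)
    (ω : Fin m → ℝ) : Prop where
  one_lt_r : 1 < r
  theta_mem : θ ∈ K
  abs_rho_le : |ρ| ≤ C₀
  norm_omega_le : ‖ω‖ ≤ C₀ * r

namespace Coeffs

variable {m : ℕ} {μ : ℝ} {U K : Set (Fin m → ℝ)} (c : Coeffs m μ U) {r ρ : ℝ}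
  {θ ω : Fin m → ℝ}

theorem differentiableAt_hM (hU : IsOpen U) (hθ : θ ∈ U) (j k : Fin m) :
    DifferentiableAt ℝ (fun x => c.hM x j k) θ :=
  ((c.hM_smooth j k).contDiffAt (hU.mem_nhds hθ)).differentiableAt (by simp)

theorem differentiableAt_a0 (hU : IsOpen U) (hr : 1 < r) (hθ : θ ∈ U) :
    DifferentiableAt ℝ (c.a0 r) θ :=
  differentiableAt_of_contDiffOn_prod isOpen_Ioi hU (by simp) c.a0_smooth hr hθ

theorem differentiableAt_a1 (hU : IsOpen U) (hr : 1 < r) (hθ : θ ∈ U) (j : Fin m) :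
    DifferentiableAt ℝ (fun x => c.a1 r x j) θ :=
  differentiableAt_of_contDiffOn_prod (f := fun r x => c.a1 r x j) isOpen_Ioi hU (by simp)
    (c.a1_smooth j) hr hθ

theorem differentiableAt_a2 (hU : IsOpen U) (hr : 1 < r) (hθ : θ ∈ U) (j k : Fin m) :
    DifferentiableAt ℝ (fun x => c.a2 r x j k) θ :=
  differentiableAt_of_contDiffOn_prod (f := fun r x => c.a2 r x j k) isOpen_Ioi hU (by simp)
    (c.a2_smooth j k) hr hθ

theorem exists_pos_mul_norm_sq_le_angularMomentumSq (hK : IsCompact K) (hKU : K ⊆ U) :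
    ∃ l > 0, ∀ θ ∈ K, ∀ ω, l * ‖ω‖ ^ 2 ≤ quadForm (c.hM θ) ω :=
  exists_pos_mul_norm_sq_le_quadForm hK (fun j k => (c.hM_smooth j k).continuousOn.mono hKU)
    fun θ hθ => c.hM_posdef θ (hKU hθ)

theorem exists_abs_pd_angularMomentumSq_le (hU : IsOpen U) (hK : IsCompact K) (hKU : K ⊆ U) :
    ∃ H ≥ 0, ∀ r ρ ω, ∀ θ ∈ K, ∀ l,
      |pdTheta (angularMomentumSq c.hM) l r θ ρ ω| ≤ H * ‖ω‖ ^ 2 ∧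
      |pdOmega (angularMomentumSq c.hM) l r θ ρ ω| ≤ H * ‖ω‖ := by
  obtain ⟨B, hB, hbound⟩ := exists_forall_abs_le_and_norm_fderiv_le hU hK hKU
    (f := fun (i : Fin m × Fin m) θ => c.hM θ i.1 i.2)
    fun i => (c.hM_smooth i.1 i.2).of_le (by exact_mod_cast le_top)
  refine ⟨2 * m ^ 2 * B, by positivity, fun r ρ ω θ hθ l => ⟨?_, ?_⟩⟩
  · have entry_le (j k : Fin m) : |fderiv ℝ (fun x => c.hM x j k) θ (Pi.single l 1)| ≤ B := by
      refine (ContinuousLinearMap.le_of_opNorm_le _ (hbound (j, k) θ hθ).2 _).trans_eq ?_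
      rw [Pi.norm_single, norm_one, mul_one]
    calc |pdTheta (angularMomentumSq c.hM) l r θ ρ ω| ≤ m ^ 2 * (B * ‖ω‖ ^ 2) := by
          simp only [pdTheta, angularMomentumSq]
          rw [fderiv_quadForm_matrix_apply (c.differentiableAt_hM hU (hKU hθ))]
          simpa using abs_quadForm_le (A := Matrix.of fun j k => _) entry_le ω
      _ ≤ 2 * (m ^ 2 * (B * ‖ω‖ ^ 2)) := le_mul_of_one_le_left (by positivity) one_le_two
      _ = 2 * m ^ 2 * B * ‖ω‖ ^ 2 := by ring
  · calc |pdOmega (angularMomentumSq c.hM) l r θ ρ ω| ≤ m ^ 2 * (2 * B * ‖ω‖) := by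
          simp only [pdOmega, angularMomentumSq]
          simpa [Pi.norm_single] using abs_fderiv_quadForm_apply_le (A := c.hM θ)
            (fun j k => (hbound (j, k) θ hθ).1) ω (Pi.single l 1)
      _ = 2 * m ^ 2 * B * ‖ω‖ := by ring

theorem exists_abs_le_and_abs_pderivTheta_le_rpow (hK : IsCompact K) (hKU : K ⊆ U) :
    ∃ A ≥ 0, ∀ r ∈ Ioi (1 : ℝ), ∀ θ ∈ K,
      (∀ l, |pderivTheta l c.a0 r θ| ≤ A * r ^ (-(1 + μ))) ∧
      (∀ j, |c.a1 r θ j| ≤ A * r ^ (-μ) ∧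
        ∀ l, |pderivTheta l (fun r x => c.a1 r x j) r θ| ≤ A * r ^ (-μ)) ∧
      (∀ j k, |c.a2 r θ j k| ≤ A * r ^ (-μ) ∧
        ∀ l, |pderivTheta l (fun r x => c.a2 r x j k) r θ| ≤ A * r ^ (-μ)) := by
  obtain ⟨A₀, hA₀, h0⟩ := exists_forall_abs_le_and_abs_pderivTheta_le zero_le_one
    (f := fun _ : Unit => c.a0) fun _ => c.a0_decay K hK hKU
  obtain ⟨A₁, hA₁, h1⟩ := exists_forall_abs_le_and_abs_pderivTheta_le zero_le_one
    (c.a1_decay K hK hKU)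
  obtain ⟨A₂, hA₂, h2⟩ := exists_forall_abs_le_and_abs_pderivTheta_le zero_le_one
    (f := fun (i : Fin m × Fin m) r x => c.a2 r x i.1 i.2)
    fun i => c.a2_decay K hK hKU i.1 i.2
  refine ⟨A₀ + A₁ + A₂, by positivity, fun r hr θ hθ => ?_⟩
  have hr0 : 0 < r := zero_lt_one.trans hr
  have enlarge {x a ν : ℝ} (hx : x ≤ a * r ^ ν) (ha : a ≤ A₀ + A₁ + A₂) :
      x ≤ (A₀ + A₁ + A₂) * r ^ ν := hx.trans (by gcongr)
  exact ⟨fun l => enlarge ((h0 () r hr θ hθ).2 l) (by linarith),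
    fun j => ⟨enlarge (h1 j r hr θ hθ).1 (by linarith),
      fun l => enlarge ((h1 j r hr θ hθ).2 l) (by linarith)⟩,
    fun j k => ⟨enlarge (h2 (j, k) r hr θ hθ).1 (by linarith),
      fun l => enlarge ((h2 (j, k) r hr θ hθ).2 l) (by linarith)⟩⟩

theorem exists_abs_pd_perturbation_le (hU : IsOpen U) (hK : IsCompact K) (hKU : K ⊆ U) {C₀ : ℝ}
    (hC₀ : 0 ≤ C₀) :
    ∃ D ≥ 0, ∀ r θ ρ ω, IsMomentumBounded K C₀ r θ ρ ω → ∀ l,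
      |pdOmega (perturbation c.a0 c.a1 c.a2) l r θ ρ ω| ≤ D * r ^ (-1 - μ) ∧
      |pdTheta (perturbation c.a0 c.a1 c.a2) l r θ ρ ω| ≤ D * r ^ (-1 - μ) * (1 + ‖ω‖) := by
  obtain ⟨A, hA, hcoeff⟩ := c.exists_abs_le_and_abs_pderivTheta_le_rpow hK hKU
  refine ⟨(C₀ ^ 2 + (1 + m + 2 * m ^ 2) * C₀) * A, by positivity,
    fun r θ ρ ω ⟨hr, hθ, hρ, hω⟩ l => ?_⟩
  obtain ⟨h0, h1, h2⟩ := hcoeff r hr θ hθ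
  have hr0 : 0 < r := zero_lt_one.trans hr
  have hrpow : A * r ^ (-μ) / r = A * r ^ (-1 - μ) := by
    rw [mul_div_assoc, ← Real.rpow_sub_one hr0.ne', show -μ - 1 = -1 - μ by ring]
  constructor
  · calc |pdOmega (perturbation c.a0 c.a1 c.a2) l r θ ρ ω|
        ≤ (1 + 2 * m ^ 2) * C₀ * (A * r ^ (-μ) / r) :=
          abs_pdOmega_perturbation_le hr0 hρ hω (h1 l).1 fun j k => (h2 j k).1
      _ ≤ (C₀ ^ 2 + (1 + m + 2 * m ^ 2) * C₀) * (A * r ^ (-μ) / r) := by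
        gcongr
        have : 0 ≤ C₀ ^ 2 + m * C₀ := by positivity
        linarith
      _ = (C₀ ^ 2 + (1 + m + 2 * m ^ 2) * C₀) * A * r ^ (-1 - μ) := by rw [hrpow, mul_assoc]
  · calc |pdTheta (perturbation c.a0 c.a1 c.a2) l r θ ρ ω|
        ≤ (C₀ ^ 2 + (m + m ^ 2) * C₀ * ‖ω‖) * (A * r ^ (-μ) / r) :=
          abs_pdTheta_perturbation_le (c.differentiableAt_a0 hU hr (hKU hθ))
            (c.differentiableAt_a1 hU hr (hKU hθ)) (c.differentiableAt_a2 hU hr (hKU hθ)) hr0 hρ hω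
            (hrpow ▸ neg_add' 1 μ ▸ h0 l) (fun j => (h1 j).2 l) fun j k => (h2 j k).2 l
      _ ≤ (C₀ ^ 2 + (1 + m + 2 * m ^ 2) * C₀) * (1 + ‖ω‖) * (A * r ^ (-μ) / r) := by
        gcongr
        have : 0 ≤ C₀ ^ 2 * ‖ω‖ + (1 + m + 2 * m ^ 2) * C₀ + (1 + m ^ 2) * C₀ * ‖ω‖ := by
          positivity
        linarith
      _ = (C₀ ^ 2 + (1 + m + 2 * m ^ 2) * C₀) * A * r ^ (-1 - μ) * (1 + ‖ω‖) := by
        rw [hrpow]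
        ring

theorem hasDerivAt_angularMomentumSq (hU : IsOpen U) {r : ℝ → ℝ} {θ : ℝ → Fin m → ℝ}
    {ρ : ℝ → ℝ} {ω : ℝ → Fin m → ℝ} {I : Set ℝ} (hsol : IsHamSolOn c.p r θ ρ ω I) {t : ℝ}
    (ht : t ∈ I) (hr : 1 < r t) (hθ : θ t ∈ U) :
    HasDerivAt (fun s => quadForm (c.hM (θ s)) (ω s))
      (angularBracket (perturbation c.a0 c.a1 c.a2) (angularMomentumSq c.hM)
        (r t) (θ t) (ρ t) (ω t)) t := by
  have hM := c.differentiableAt_hM hU hθ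
  refine (hsol.hasDerivAt_angularBracket ht (q := fun θ ω => quadForm (c.hM θ) ω)
    (differentiableAt_quadForm_comp hM (ω t))).congr_deriv ?_
  rw [Coeffs.p, energy_eq_add_perturbation]
  exact angularBracket_add_mul_self_add (fun _ ρ => ρ ^ 2) (fun r _ => (r ^ 2)⁻¹)
    (hasFDerivAt_quadForm_matrix hM (ω t)).differentiableAt
    (hasFDerivAt_quadForm (c.hM (θ t)) (ω t)).differentiableAt
    (hasFDerivAt_perturbation_theta (c.differentiableAt_a0 hU hr hθ)
      (c.differentiableAt_a1 hU hr hθ) (c.differentiableAt_a2 hU hr hθ)).differentiableAt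
    hasFDerivAt_perturbation_omega.differentiableAt

theorem exists_abs_angularBracket_le (hU : IsOpen U) (hK : IsCompact K) (hKU : K ⊆ U) {C₀ : ℝ}
    (hC₀ : 0 ≤ C₀) :
    ∃ C > 0, ∀ r θ ρ ω, IsMomentumBounded K C₀ r θ ρ ω →
      |angularBracket (perturbation c.a0 c.a1 c.a2) (angularMomentumSq c.hM) r θ ρ ω| ≤
        C * r ^ (-1 - μ) * (1 + quadForm (c.hM θ) ω) := by
  obtain ⟨l, hl, hcoercive⟩ := c.exists_pos_mul_norm_sq_le_angularMomentumSq hK hKU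
  obtain ⟨H, hH, hq⟩ := c.exists_abs_pd_angularMomentumSq_le hU hK hKU
  obtain ⟨D, hD, hV⟩ := c.exists_abs_pd_perturbation_le hU hK hKU hC₀
  refine ⟨3 * m * D * H * (1 + l⁻¹) + 1, by positivity, fun r θ ρ ω hpt => ?_⟩
  have hX : 0 < r ^ (-1 - μ) := Real.rpow_pos_of_pos (zero_lt_one.trans hpt.one_lt_r) _
  set X := r ^ (-1 - μ)
  set Q := quadForm (c.hM θ) ω
  have hlow : l * ‖ω‖ ^ 2 ≤ Q := hcoercive θ hpt.theta_mem ω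
  have hQ : 0 ≤ Q := le_trans (by positivity) hlow
  have hnorm_sq : ‖ω‖ ^ 2 ≤ l⁻¹ * Q := (le_inv_mul_iff₀ hl).2 hlow
  calc |angularBracket (perturbation c.a0 c.a1 c.a2) (angularMomentumSq c.hM) r θ ρ ω|
      ≤ m * (D * X * (H * ‖ω‖ ^ 2) + D * X * (1 + ‖ω‖) * (H * ‖ω‖)) :=
        abs_angularBracket_le (fun j => (hV r θ ρ ω hpt j).1)
          (fun j => (hq r ρ ω θ hpt.theta_mem j).1) (fun j => (hV r θ ρ ω hpt j).2)
          fun j => (hq r ρ ω θ hpt.theta_mem j).2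
    _ = m * D * H * X * (2 * ‖ω‖ ^ 2 + ‖ω‖) := by ring
    _ ≤ m * D * H * X * (3 * (1 + ‖ω‖ ^ 2)) := by
      gcongr
      nlinarith [sq_nonneg (‖ω‖ - 1)]
    _ ≤ m * D * H * X * (3 * ((1 + l⁻¹) * (1 + Q))) := by
      gcongr
      have : 0 ≤ l⁻¹ + Q := by positivity
      linarith
    _ ≤ (3 * m * D * H * (1 + l⁻¹) + 1) * X * (1 + Q) := by
      have : 0 ≤ X * (1 + Q) := by positivity
      linarith

end Coeffs

theorem statement_6_general {m : ℕ} {μ : ℝ} (hμ : 0 < μ)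
    {U : Set (Fin m → ℝ)} (hU : IsOpen U) (c : Coeffs m μ U)
    (K : Set (Fin m → ℝ)) (hK : IsCompact K) (hKU : K ⊆ U) (T₀ : ℝ)
    (c₀ C₀ : ℝ) (hc₀ : 0 < c₀)
    (r : ℝ → ℝ) (θ : ℝ → Fin m → ℝ) (ρ : ℝ → ℝ) (ω : ℝ → Fin m → ℝ)
    (hsol : IsHamSolOn c.p r θ ρ ω (Iic T₀))
    (hdom : ∀ t ≤ T₀, r t ∈ Ioi (1 : ℝ) ∧ θ t ∈ K ∧ r t ≥ c₀ * (1 + |t|) ∧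
      |ρ t| ≤ C₀ ∧ eNorm (ω t) ≤ C₀ * r t) :
    ∃ C > (0 : ℝ),
      (∀ t ≤ T₀, ∃ L' : ℝ,
        HasDerivAt (fun s => ∑ j, ∑ k, c.hM (θ s) j k * ω s j * ω s k) L' t ∧
        |L'| ≤ C * (r t) ^ (-(1 : ℝ) - μ) *
          (1 + ∑ j, ∑ k, c.hM (θ t) j k * ω t j * ω t k)) ∧
      (∃ B : ℝ, ∀ t ≤ T₀,
        (∑ j, ∑ k, c.hM (θ t) j k * ω t j * ω t k) ≤ B ∧ eNorm (ω t) ≤ B) := by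
  have hC₀ : 0 ≤ C₀ := (abs_nonneg _).trans (hdom T₀ le_rfl).2.2.2.1
  have hθ (t : ℝ) (ht : t ≤ T₀) : θ t ∈ K := (hdom t ht).2.1
  obtain ⟨C, hC, hbracket⟩ := c.exists_abs_angularBracket_le hU hK hKU hC₀
  obtain ⟨l, hl, hcoercive⟩ := c.exists_pos_mul_norm_sq_le_angularMomentumSq hK hKU
  have hL' (t : ℝ) (ht : t ≤ T₀) : ∃ L', HasDerivAt (fun s => quadForm (c.hM (θ s)) (ω s)) L' t ∧
      |L'| ≤ C * r t ^ (-1 - μ) * (1 + quadForm (c.hM (θ t)) (ω t)) := by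
    obtain ⟨hr, hθt, -, hρ, hω⟩ := hdom t ht
    exact ⟨_, c.hasDerivAt_angularMomentumSq hU hsol ht hr (hKU hθt),
      hbracket _ _ _ _ ⟨hr, hθt, hρ, (norm_le_eNorm _).trans hω⟩⟩
  have hL (t : ℝ) (ht : t ≤ T₀) : 0 ≤ quadForm (c.hM (θ t)) (ω t) :=
    le_trans (by positivity) (hcoercive _ (hθ t ht) (ω t))
  obtain ⟨B, hB⟩ := exists_forall_le_of_abs_deriv_le_rpow hμ hc₀ hC.le
    (fun t ht => (hdom t ht).2.2.1) hL hL'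
  exact ⟨C, hC, hL', max B (√m * √(l⁻¹ * B)), fun t ht => ⟨le_max_of_le_left (hB t ht),
    le_max_of_le_right <| eNorm_le_of_mul_norm_sq_le hl <|
      (hcoercive _ (hθ t ht) (ω t)).trans (hB t ht)⟩⟩

/-- Angular momentum bound. Along a backward trajectory with linear
escape, the quantity `L(t) = Σ h^{jk}(θ(t)) ω_j(t) ω_k(t)` satisfies
`|L'(t)| ≤ C r(t)^{-1-μ}(1 + L(t))`, and hence `L(t)` and `|ω(t)|` stay bounded. -/
theorem statement_6 {m : ℕ} (hm : 1 ≤ m) {μ : ℝ} (hμ : μ ∈ Ioo (0:ℝ) 1)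
    {U : Set (Fin m → ℝ)} (hU : IsOpen U) (c : Coeffs m μ U)
    (K : Set (Fin m → ℝ)) (hK : IsCompact K) (hKU : K ⊆ U) (T₀ : ℝ)
    (c₀ C₀ : ℝ) (hc₀ : 0 < c₀) (hC₀ : 0 < C₀)
    (r : ℝ → ℝ) (θ : ℝ → Fin m → ℝ) (ρ : ℝ → ℝ) (ω : ℝ → Fin m → ℝ)
    (hsol : IsHamSolOn c.p r θ ρ ω (Iic T₀))
    (hdom : ∀ t ≤ T₀, r t ∈ Ioi (1:ℝ) ∧ θ t ∈ K ∧ r t ≥ c₀ * (1 + |t|) ∧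
      |ρ t| ≤ C₀ ∧ eNorm (ω t) ≤ C₀ * r t) :
    ∃ C > (0:ℝ),
      (∀ t ≤ T₀, ∃ L' : ℝ,
        HasDerivAt (fun s => ∑ j, ∑ k, c.hM (θ s) j k * ω s j * ω s k) L' t ∧
        |L'| ≤ C * (r t) ^ (-(1:ℝ) - μ) *
          (1 + ∑ j, ∑ k, c.hM (θ t) j k * ω t j * ω t k)) ∧
      (∃ B : ℝ, ∀ t ≤ T₀,
        (∑ j, ∑ k, c.hM (θ t) j k * ω t j * ω t k) ≤ B ∧ eNorm (ω t) ≤ B) :=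
  statement_6_general hμ.1 hU c K hK hKU T₀ c₀ C₀ hc₀ r θ ρ ω hsol hdom

end Scattering
end
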